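/- arXiv:2111.10999 — 2 statements merged into one kernel-verified Lean document; each statement's English description precedes it below -/
import Mathlib

section
/- (1) The rank of J^{w,Co₀}_{*,Λ,2} over ℂ[E₄,E₆] is 4, i.e. s(2) = 4; the basic Conway orbits of index 2 are O₀, O₂, O₃, O₄; and δ₂ = 5. (2) The rank of J^{w,Co₀}_{*,Λ,3} over ℂ[E₄,E₆] is 10, i.e. s(3) = 10; the basic Conway orbits of index 3 are O₀, O₂, O₃, O₄, O₅, O_{6a}, O_{6b}, O₇, O_{8b}, O_{9b}; and δ₃ = 19. -/
open Complex Matrix UpperHalfPlane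
open scoped Manifold MatrixGroups Real Topology BigOperators

noncomputable section

/-- Vectors of the rank-24 lattice (coordinates w.r.t. a fixed basis). -/
abbrev LV := Fin 24 → ℤ

/-- Complexified vectors. -/
abbrev CV := Fin 24 → ℂ

/-- The bilinear form attached to a Gram matrix `B`. -/
def pairZ (B : Matrix (Fin 24) (Fin 24) ℤ) (v u : LV) : ℤ := v ⬝ᵥ B.mulVec u

/-- The complex bilinear extension of the form. -/
def pairC (B : Matrix (Fin 24) (Fin 24) ℤ) (z w : CV) : ℂ :=
  z ⬝ᵥ ((B.map (Int.cast : ℤ → ℂ)).mulVec w)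

/-- Inclusion of lattice vectors into complexified vectors. -/
def liftC (v : LV) : CV := fun i => (v i : ℂ)

/-- `B` is a Gram matrix of the Leech lattice: even, unimodular, positive definite of
rank 24, with no vectors of norm 2 (no roots). -/
def IsLeech (B : Matrix (Fin 24) (Fin 24) ℤ) : Prop :=
  B.IsSymm ∧ B.det = 1 ∧ (∀ v : LV, v ≠ 0 → 0 < pairZ B v v) ∧
    (∀ v : LV, Even (pairZ B v v)) ∧ (∀ v : LV, pairZ B v v ≠ 2)

/-- The automorphism group `Co₀ = Aut(Λ)` of the lattice, as a set of integral matrices. -/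
def ConwayGroup (B : Matrix (Fin 24) (Fin 24) ℤ) : Set (Matrix (Fin 24) (Fin 24) ℤ) :=
  {σ | IsUnit σ.det ∧ σᵀ * B * σ = B}

/-- Action of an integral matrix on complexified vectors. -/
def actC (σ : Matrix (Fin 24) (Fin 24) ℤ) (z : CV) : CV :=
  (σ.map (Int.cast : ℤ → ℂ)).mulVec z

/-- `e(x) = exp(2πix)`. -/
def eC (x : ℂ) : ℂ := Complex.exp (2 * (Real.pi : ℂ) * Complex.I * x)

/-- The Fourier term `qⁿ ζ^ℓ`. -/
def fterm (B : Matrix (Fin 24) (Fin 24) ℤ) (n : ℕ) (ℓ : LV) (τ : UpperHalfPlane) (z : CV) : ℂ :=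
  eC ((n : ℂ) * (τ : ℂ)) * eC (pairC B (liftC ℓ) z)

/-- Lower-left entry of `A ∈ SL(2,ℤ)`, as a complex number. -/
def slc (A : SL(2, ℤ)) : ℂ := ((A : Matrix (Fin 2) (Fin 2) ℤ) 1 0 : ℤ)

/-- Lower-right entry of `A ∈ SL(2,ℤ)`, as a complex number. -/
def sld (A : SL(2, ℤ)) : ℂ := ((A : Matrix (Fin 2) (Fin 2) ℤ) 1 1 : ℤ)

/-- The automorphy factor `cτ + d`. -/
def jfactor (A : SL(2, ℤ)) (τ : UpperHalfPlane) : ℂ := slc A * (τ : ℂ) + sld A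

/-- `φ : ℍ × (Λ⊗ℂ) → ℂ` is a Conway invariant weak Jacobi form of weight `k` and index `t`
with Fourier coefficients `f`. -/
structure IsJacobiFormWith (B : Matrix (Fin 24) (Fin 24) ℤ) (k : ℤ) (t : ℕ)
    (φ : UpperHalfPlane → CV → ℂ) (f : ℕ → LV → ℂ) : Prop where
  holo_tau : ∀ z : CV, MDifferentiable 𝓘(ℂ) 𝓘(ℂ) fun τ : UpperHalfPlane => φ τ z
  holo_z : ∀ τ : UpperHalfPlane, Differentiable ℂ (φ τ)
  conway_invar : ∀ σ ∈ ConwayGroup B, ∀ (τ : UpperHalfPlane) (z : CV), φ τ (actC σ z) = φ τ z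
  quasi_periodic : ∀ (x y : LV) (τ : UpperHalfPlane) (z : CV),
    φ τ (z + (τ : ℂ) • liftC x + liftC y) =
      Complex.exp (-(t : ℂ) * (Real.pi : ℂ) * Complex.I * (pairZ B x x : ℂ) * (τ : ℂ)
        - 2 * (t : ℂ) * (Real.pi : ℂ) * Complex.I * pairC B (liftC x) z) * φ τ z
  modular : ∀ (A : SL(2, ℤ)) (τ : UpperHalfPlane) (z : CV),
    φ (A • τ) ((jfactor A τ)⁻¹ • z) =
      (jfactor A τ) ^ k *
        Complex.exp ((t : ℂ) * (Real.pi : ℂ) * Complex.I * slc A * pairC B z z / jfactor A τ) *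
        φ τ z
  expansion : ∀ (τ : UpperHalfPlane) (z : CV),
    HasSum (fun p : ℕ × LV => f p.1 p.2 * fterm B p.1 p.2 τ z) (φ τ z)

/-- Conway invariant weak Jacobi forms. -/
def IsWeakJacobiForm (B : Matrix (Fin 24) (Fin 24) ℤ) (k : ℤ) (t : ℕ)
    (φ : UpperHalfPlane → CV → ℂ) : Prop :=
  ∃ f, IsJacobiFormWith B k t φ f

/-- Conway invariant holomorphic Jacobi forms. -/
def IsHolJacobiForm (B : Matrix (Fin 24) (Fin 24) ℤ) (k : ℤ) (t : ℕ)
    (φ : UpperHalfPlane → CV → ℂ) : Prop :=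
  ∃ f, IsJacobiFormWith B k t φ f ∧
    ∀ (n : ℕ) (ℓ : LV), 2 * (n : ℤ) * t - pairZ B ℓ ℓ < 0 → f n ℓ = 0

/-- Modular forms of weight `k` on `SL₂(ℤ)`; the ring of all of them is `ℂ[E₄,E₆]`. -/
abbrev MForm (k : ℤ) := ModularForm (CongruenceSubgroup.Gamma 1) k

/-- The family `φ i` (of weights `w i`) freely generates the module of all forms satisfying
`P` over the ring `M_*(SL₂(ℤ)) = ℂ[E₄,E₆]` of modular forms on `SL₂(ℤ)`. -/
def FreelyGenerates (P : ℤ → (UpperHalfPlane → CV → ℂ) → Prop) {n : ℕ}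
    (w : Fin n → ℤ) (φ : Fin n → UpperHalfPlane → CV → ℂ) : Prop :=
  (∀ i, P (w i) (φ i)) ∧
  ∀ (k : ℤ) (ψ : UpperHalfPlane → CV → ℂ), P k ψ →
    ∃! g : (i : Fin n) → MForm (k - w i),
      ∀ (τ : UpperHalfPlane) (z : CV), ψ τ z = ∑ i, (g i) τ * φ i τ z

/-- The point `(aτ+b)/d` of the upper half-plane (for `a, d > 0`). -/
def heckePt (a d b : ℕ) (τ : UpperHalfPlane) : UpperHalfPlane :=
  if h : 0 < ((((a : ℂ) * (τ : ℂ) + (b : ℂ)) / (d : ℂ)).im) then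
    ⟨((a : ℂ) * (τ : ℂ) + (b : ℂ)) / (d : ℂ), h⟩ else τ

/-- The Hecke operator `T₋(m)` on Jacobi forms of weight `k`. -/
def heckeOp (k : ℤ) (m : ℕ) (φ : UpperHalfPlane → CV → ℂ) : UpperHalfPlane → CV → ℂ :=
  fun τ z => (m : ℂ)⁻¹ * ∑ d ∈ m.divisors, ∑ b ∈ Finset.range d,
    ((m / d : ℕ) : ℂ) ^ k * φ (heckePt (m / d) d b τ) (((m / d : ℕ) : ℂ) • z)

/-- The Jacobi theta function `Θ_Λ = A₁` of the lattice. -/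
def thetaLeech (B : Matrix (Fin 24) (Fin 24) ℤ) : UpperHalfPlane → CV → ℂ := fun τ z =>
  ∑' ℓ : LV, Complex.exp ((Real.pi : ℂ) * Complex.I * (pairZ B ℓ ℓ : ℂ) * (τ : ℂ)
    + 2 * (Real.pi : ℂ) * Complex.I * pairC B (liftC ℓ) z)

/-- `σ_k(n) = Σ_{d ∣ n} d^k`. -/
def sigmaNat (k n : ℕ) : ℕ := ∑ d ∈ n.divisors, d ^ k

/-- `A_t = σ₁₁(t)⁻¹ (A₁ | T₋(t))`, a holomorphic Jacobi form of weight 12 and index `t`. -/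
def Aform (B : Matrix (Fin 24) (Fin 24) ℤ) (t : ℕ) : UpperHalfPlane → CV → ℂ := fun τ z =>
  ((sigmaNat 11 t : ℂ))⁻¹ * heckeOp 12 t (thetaLeech B) τ z

/-- The quasimodular Eisenstein series `E₂`. -/
def E2 : UpperHalfPlane → ℂ := fun τ =>
  1 - 24 * ∑' n : ℕ, (sigmaNat 1 (n + 1) : ℂ) * eC (((n : ℂ) + 1) * (τ : ℂ))

/-- The discriminant cusp form `Δ(τ) = q ∏ (1-qⁿ)^24`. -/
def DeltaForm : UpperHalfPlane → ℂ := fun τ =>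
  eC (τ : ℂ) * ∏' n : ℕ, (1 - eC (((n : ℂ) + 1) * (τ : ℂ))) ^ 24

/-- `aτ`. -/
def scaleH (a : ℕ) (τ : UpperHalfPlane) : UpperHalfPlane := heckePt a 1 0 τ

/-- `(τ+j)/t`. -/
def sliceH (t j : ℕ) (τ : UpperHalfPlane) : UpperHalfPlane := heckePt 1 t j τ

/-- `f₂(τ) = (tE₂(tτ) - E₂(τ))/(t-1)`, a modular form of weight 2 on `Γ₀(t)`. -/
def f2w (t : ℕ) (τ : UpperHalfPlane) : ℂ := ((t : ℂ) * E2 (scaleH t τ) - E2 τ) / ((t : ℂ) - 1)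

/-- `B_t`, a holomorphic Jacobi form of weight 14 and index `t` (for `t` prime). -/
def Bform (B : Matrix (Fin 24) (Fin 24) ℤ) (t : ℕ) : UpperHalfPlane → CV → ℂ := fun τ z =>
  ((t : ℂ) ^ 12 / ((t : ℂ) ^ 12 - 1)) *
    (f2w t τ * thetaLeech B (scaleH t τ) ((t : ℂ) • z)
      - (t : ℂ) ^ (-13 : ℤ) *
        ∑ j ∈ Finset.range t, f2w t (sliceH t j τ) * thetaLeech B (sliceH t j τ) z)

/-- Fourier coefficients of `E₂`. -/
def e2coeff : ℕ → ℂ := fun m => if m = 0 then 1 else -24 * (sigmaNat 1 m : ℂ)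

/-- Fourier coefficients of the image `H_k(φ)` of the modified heat operator applied to a
Jacobi form of weight `k` and index `t` with Fourier coefficients `f`:
`H_k(φ) = 𝓗(φ) + ((12-k)/12)E₂φ` where `𝓗` multiplies `f(n,ℓ)` by `n - (ℓ,ℓ)/(2t)`. -/
def heatCoeff (B : Matrix (Fin 24) (Fin 24) ℤ) (k : ℤ) (t : ℕ) (f : ℕ → LV → ℂ) :
    ℕ → LV → ℂ := fun n ℓ =>
  ((n : ℂ) - (pairZ B ℓ ℓ : ℂ) / (2 * (t : ℂ))) * f n ℓ +
    ((12 - k : ℤ) : ℂ) / 12 * ∑ m ∈ Finset.range (n + 1), e2coeff m * f (n - m) ℓ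

/-- The function with Fourier coefficients `f`. -/
def fourierSeries (B : Matrix (Fin 24) (Fin 24) ℤ) (f : ℕ → LV → ℂ) :
    UpperHalfPlane → CV → ℂ := fun τ z =>
  ∑' p : ℕ × LV, f p.1 p.2 * fterm B p.1 p.2 τ z

/-- The family `Φ m = Φ_{12,m}` of Fourier–Jacobi coefficients of the Borcherds form `Φ₁₂`
at the Leech cusp:
`Δ(τ)·exp(−Σ_{m≥1}((Δ⁻¹A₁)|T₋(m))(τ,𝔷)e^{2πimω}) = Σ_{m≥0} Φ_{12,m}(τ,𝔷)e^{2πimω}`. -/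
def IsFJExpansionOfPhi12 (B : Matrix (Fin 24) (Fin 24) ℤ)
    (Φ : ℕ → UpperHalfPlane → CV → ℂ) : Prop :=
  ∀ (τ ω : UpperHalfPlane) (z : CV),
    HasSum (fun m : ℕ => Φ m τ z * eC ((m : ℂ) * (ω : ℂ)))
      (DeltaForm τ * Complex.exp
        (- ∑' m : ℕ, heckeOp 0 (m + 1) (fun σ w => thetaLeech B σ w / DeltaForm σ) τ z *
            eC (((m : ℂ) + 1) * (ω : ℂ))))

/-- `S_t`: the set of lattice vectors of minimal norm in their coset modulo `tΛ`. -/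
def minimalSet (B : Matrix (Fin 24) (Fin 24) ℤ) (t : ℕ) : Set LV :=
  {v | ∀ u : LV, (∃ w : LV, u = v + (t : ℤ) • w) → pairZ B v v ≤ pairZ B u u}

/-- `v` and `u` are conjugate modulo `tΛ` up to the Conway group. -/
def conjModT (B : Matrix (Fin 24) (Fin 24) ℤ) (t : ℕ) (v u : LV) : Prop :=
  ∃ σ ∈ ConwayGroup B, ∃ w : LV, v - σ.mulVec u = (t : ℤ) • w

/-- `s(t) = |(S_t/Co₀)/tΛ|`. -/
def sRank (B : Matrix (Fin 24) (Fin 24) ℤ) (t : ℕ) : ℕ :=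
  Nat.card (Quot (fun v u : minimalSet B t => conjModT B t v.1 u.1))

/-- `R` is a system of representatives for `(S_t/Co₀)/tΛ` (of minimal length). -/
def IsRepSystem (B : Matrix (Fin 24) (Fin 24) ℤ) (t : ℕ) (R : Finset LV) : Prop :=
  (↑R ⊆ minimalSet B t) ∧ ∀ v ∈ minimalSet B t, ∃! r, r ∈ R ∧ conjModT B t v r

/-- The Conway orbit of a lattice vector. -/
def orbitOf (B : Matrix (Fin 24) (Fin 24) ℤ) (v : LV) : Set LV :=
  {u | ∃ σ ∈ ConwayGroup B, u = σ.mulVec v}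

/-- `O` is a Conway orbit of Leech vectors of type `x` (i.e. norm `2x`) with `c` elements. -/
def OrbitData (B : Matrix (Fin 24) (Fin 24) ℤ) (O : Set LV) (x c : ℕ) : Prop :=
  (∃ v : LV, O = orbitOf B v) ∧ (∀ v ∈ O, pairZ B v v = 2 * (x : ℤ)) ∧ Nat.card O = c

/-- `W` is a `d`-dimensional subspace of the space of functions `ℍ × (Λ⊗ℂ) → ℂ`. -/
def SpanDimIs (W : (UpperHalfPlane → CV → ℂ) → Prop) (d : ℕ) : Prop :=
  ∃ φ : Fin d → UpperHalfPlane → CV → ℂ, (∀ i, W (φ i)) ∧ LinearIndependent ℂ φ ∧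
    ∀ ψ, W ψ → ∃ c : Fin d → ℂ, ψ = ∑ i, c i • φ i


section LeechAux

variable {B : Matrix (Fin 24) (Fin 24) ℤ}

lemma pz_add_left (u v w : LV) : pairZ B (u + v) w = pairZ B u w + pairZ B v w := by
  simp [pairZ, add_dotProduct]

lemma pz_add_right (u v w : LV) : pairZ B u (v + w) = pairZ B u v + pairZ B u w := by
  simp [pairZ, Matrix.mulVec_add, dotProduct_add]

lemma pz_smul_left (a : ℤ) (v w : LV) : pairZ B (a • v) w = a * pairZ B v w := by
  simp only [pairZ]
  rw [smul_dotProduct, smul_eq_mul]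

lemma pz_smul_right (a : ℤ) (v w : LV) : pairZ B v (a • w) = a * pairZ B v w := by
  simp only [pairZ]
  rw [Matrix.mulVec_smul, dotProduct_smul, smul_eq_mul]

lemma pz_neg_left (v w : LV) : pairZ B (-v) w = - pairZ B v w := by
  simp [pairZ]

lemma pz_neg_right (v w : LV) : pairZ B v (-w) = - pairZ B v w := by
  simp [pairZ, Matrix.mulVec_neg]

lemma pz_sub_left (u v w : LV) : pairZ B (u - v) w = pairZ B u w - pairZ B v w := by
  simp [pairZ, sub_dotProduct]

lemma pz_sub_right (u v w : LV) : pairZ B u (v - w) = pairZ B u v - pairZ B u w := by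
  simp [pairZ, Matrix.mulVec_sub, dotProduct_sub]

lemma pz_zero_left (w : LV) : pairZ B 0 w = 0 := by
  simp [pairZ]

lemma pz_zero_right (w : LV) : pairZ B w 0 = 0 := by
  simp [pairZ]

lemma pz_sum_left {α : Type*} (F : Finset α) (f : α → LV) (w : LV) :
    pairZ B (∑ i ∈ F, f i) w = ∑ i ∈ F, pairZ B (f i) w := by
  simp only [pairZ]
  rw [sum_dotProduct]

lemma pz_symm (hB : IsLeech B) (u v : LV) : pairZ B u v = pairZ B v u := by
  have h : Bᵀ = B := hB.1
  simp only [pairZ]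
  rw [dotProduct_comm, dotProduct_mulVec, ← Matrix.mulVec_transpose, h,
    dotProduct_comm]

lemma pz_sum_right {α : Type*} (hB : IsLeech B) (F : Finset α) (f : α → LV) (w : LV) :
    pairZ B w (∑ i ∈ F, f i) = ∑ i ∈ F, pairZ B w (f i) := by
  rw [pz_symm hB, pz_sum_left]
  exact Finset.sum_congr rfl fun i _ => pz_symm hB _ _

/-- half of the norm -/
lemma pz_type (hB : IsLeech B) (v : LV) :
    ∃ a : ℤ, pairZ B v v = 2 * a ∧ 0 ≤ a ∧ a ≠ 1 ∧ (a = 0 → v = 0) := by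
  obtain ⟨a, ha⟩ := hB.2.2.2.1 v
  have h2 := hB.2.2.2.2 v
  have h3 := hB.2.2.1 v
  by_cases hv : v = 0
  · subst hv
    rw [pz_zero_left] at ha
    exact ⟨0, by simp [pz_zero_left], le_rfl, by norm_num, fun _ => rfl⟩
  · have := h3 hv
    exact ⟨a, by omega, by omega, by omega, fun h => by omega⟩

lemma pz_nonneg (hB : IsLeech B) (v : LV) : 0 ≤ pairZ B v v := by
  obtain ⟨a, h, h', _⟩ := pz_type hB v
  omega

/-! group facts -/

lemma one_mem_CG : (1 : Matrix (Fin 24) (Fin 24) ℤ) ∈ ConwayGroup B := by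
  simp [ConwayGroup]

lemma neg_one_mem_CG : (-1 : Matrix (Fin 24) (Fin 24) ℤ) ∈ ConwayGroup B := by
  simp [ConwayGroup, Matrix.det_neg]

lemma mul_mem_CG {σ τ : Matrix (Fin 24) (Fin 24) ℤ} (h : σ ∈ ConwayGroup B)
    (h' : τ ∈ ConwayGroup B) : σ * τ ∈ ConwayGroup B := by
  refine ⟨by rw [Matrix.det_mul]; exact h.1.mul h'.1, ?_⟩
  have h2 := h'.2
  rw [← h.2] at h2
  rw [Matrix.transpose_mul]
  rw [h.2] at h2
  calc τᵀ * σᵀ * B * (σ * τ) = τᵀ * (σᵀ * B * σ) * τ := by simp only [Matrix.mul_assoc]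
    _ = B := by rw [h.2, h'.2]

lemma inv_mem_CG {σ : Matrix (Fin 24) (Fin 24) ℤ} (h : σ ∈ ConwayGroup B) :
    σ⁻¹ ∈ ConwayGroup B := by
  refine ⟨Matrix.isUnit_nonsing_inv_det _ h.1, ?_⟩
  have h1 : σ * σ⁻¹ = 1 := Matrix.mul_nonsing_inv _ h.1
  have h2 : (σ⁻¹)ᵀ * σᵀ = 1 := by rw [← Matrix.transpose_mul, h1, Matrix.transpose_one]
  calc (σ⁻¹)ᵀ * B * σ⁻¹ = (σ⁻¹)ᵀ * (σᵀ * B * σ) * σ⁻¹ := by rw [h.2]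
    _ = ((σ⁻¹)ᵀ * σᵀ) * B * (σ * σ⁻¹) := by simp only [Matrix.mul_assoc]
    _ = B := by rw [h1, h2]; simp

lemma CG_pair {σ : Matrix (Fin 24) (Fin 24) ℤ} (h : σ ∈ ConwayGroup B) (u v : LV) :
    pairZ B (σ.mulVec u) (σ.mulVec v) = pairZ B u v := by
  simp only [pairZ]
  conv_rhs => rw [← h.2]
  rw [← Matrix.vecMul_transpose, ← dotProduct_mulVec]
  simp only [Matrix.mulVec_mulVec, Matrix.mul_assoc]

lemma inv_mulVec_CG {σ : Matrix (Fin 24) (Fin 24) ℤ} (h : σ ∈ ConwayGroup B) (v : LV) :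
    σ⁻¹.mulVec (σ.mulVec v) = v := by
  rw [Matrix.mulVec_mulVec, Matrix.nonsing_inv_mul _ h.1, Matrix.one_mulVec]

lemma mulVec_inv_CG {σ : Matrix (Fin 24) (Fin 24) ℤ} (h : σ ∈ ConwayGroup B) (v : LV) :
    σ.mulVec (σ⁻¹.mulVec v) = v := by
  rw [Matrix.mulVec_mulVec, Matrix.mul_nonsing_inv _ h.1, Matrix.one_mulVec]

def IsOrb (B : Matrix (Fin 24) (Fin 24) ℤ) (S : Set LV) : Prop := ∃ v : LV, S = orbitOf B v

lemma IsOrb.act {S : Set LV} (h : IsOrb B S) {σ : Matrix (Fin 24) (Fin 24) ℤ}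
    (hσ : σ ∈ ConwayGroup B) {u : LV} (hu : u ∈ S) : σ.mulVec u ∈ S := by
  obtain ⟨v, rfl⟩ := h
  obtain ⟨τ, hτ, rfl⟩ := hu
  exact ⟨σ * τ, mul_mem_CG hσ hτ, by rw [Matrix.mulVec_mulVec]⟩

lemma IsOrb.trans {S : Set LV} (h : IsOrb B S) {u v : LV} (hu : u ∈ S) (hv : v ∈ S) :
    ∃ σ ∈ ConwayGroup B, v = σ.mulVec u := by
  obtain ⟨w, rfl⟩ := h
  obtain ⟨τ, hτ, rfl⟩ := hu
  obtain ⟨ρ, hρ, rfl⟩ := hv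
  exact ⟨ρ * τ⁻¹, mul_mem_CG hρ (inv_mem_CG hτ), by
    rw [← Matrix.mulVec_mulVec, inv_mulVec_CG hτ]⟩

lemma IsOrb.neg {S : Set LV} (h : IsOrb B S) {u : LV} (hu : u ∈ S) : -u ∈ S := by
  have := h.act neg_one_mem_CG hu
  rwa [Matrix.neg_mulVec, Matrix.one_mulVec] at this

lemma IsOrb.nonempty {S : Set LV} (h : IsOrb B S) : S.Nonempty := by
  obtain ⟨v, rfl⟩ := h
  exact ⟨v, 1, one_mem_CG, by simp⟩

lemma IsOrb.eq_of_mem {S T : Set LV} (h : IsOrb B S) (h' : IsOrb B T) {u : LV} (hu : u ∈ S)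
    (hu' : u ∈ T) : S = T := by
  ext v
  constructor
  · intro hv
    obtain ⟨σ, hσ, rfl⟩ := h.trans hu hv
    exact h'.act hσ hu'
  · intro hv
    obtain ⟨σ, hσ, rfl⟩ := h'.trans hu' hv
    exact h.act hσ hu

lemma IsOrb.zero : IsOrb B {0} := by
  refine ⟨0, ?_⟩
  ext v
  simp only [Set.mem_singleton_iff, orbitOf, Matrix.mulVec_zero, Set.mem_ofPred_eq]
  exact ⟨fun h => ⟨1, one_mem_CG, h⟩, fun ⟨_, _, h⟩ => h⟩

/-! congruence -/

def cong (t : ℕ) (v u : LV) : Prop := ∃ w : LV, v - u = (t : ℤ) • w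

lemma cong.symm {t : ℕ} {v u : LV} (h : cong t v u) : cong t u v := by
  obtain ⟨w, hw⟩ := h
  exact ⟨-w, by rw [smul_neg, ← hw]; abel⟩

lemma cong.trans {t : ℕ} {v u z : LV} (h : cong t v u) (h' : cong t u z) : cong t v z := by
  obtain ⟨w, hw⟩ := h
  obtain ⟨w', hw'⟩ := h'
  exact ⟨w + w', by rw [smul_add, ← hw, ← hw']; abel⟩

lemma cong.rfl' {t : ℕ} {v : LV} : cong t v v := ⟨0, by simp⟩

lemma cong.act {t : ℕ} {v u : LV} (h : cong t v u) (σ : Matrix (Fin 24) (Fin 24) ℤ) :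
    cong t (σ.mulVec v) (σ.mulVec u) := by
  obtain ⟨w, hw⟩ := h
  exact ⟨σ.mulVec w, by rw [← Matrix.mulVec_sub, hw, Matrix.mulVec_smul]⟩

def redT (t : ℕ) (v : LV) : Fin 24 → ZMod t := fun i => (v i : ZMod t)

lemma redT_eq {t : ℕ} {v u : LV} : redT t v = redT t u ↔ cong t v u := by
  constructor
  · intro h
    have : ∀ i, ∃ w : ℤ, v i - u i = t * w := by
      intro i
      have h1 := congrFun h i
      simp only [redT] at h1
      have h2 := (ZMod.intCast_eq_intCast_iff_dvd_sub (u i) (v i) t).1 h1.symm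
      exact h2
    choose w hw using this
    exact ⟨w, by ext i; simp [hw i]⟩
  · rintro ⟨w, hw⟩
    ext i
    have := congrFun hw i
    simp only [Pi.sub_apply, Pi.smul_apply, smul_eq_mul] at this
    simp only [redT]
    exact ((ZMod.intCast_eq_intCast_iff_dvd_sub (u i) (v i) t).2 ⟨w i, this⟩).symm

lemma redT_surj {t : ℕ} (y : Fin 24 → ZMod t) : ∃ v, redT t v = y := by
  refine ⟨fun i => (ZMod.intCast_surjective (y i)).choose, ?_⟩
  ext i
  exact (ZMod.intCast_surjective (y i)).choose_spec

lemma mem_min {t : ℕ} {v : LV} :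
    v ∈ minimalSet B t ↔ ∀ u, cong t u v → pairZ B v v ≤ pairZ B u u := by
  constructor
  · rintro h u ⟨w, hw⟩
    exact h u ⟨w, by rw [← hw]; abel⟩
  · rintro h u ⟨w, rfl⟩
    exact h _ ⟨w, by abel⟩

lemma min_act {t : ℕ} {v : LV} {σ : Matrix (Fin 24) (Fin 24) ℤ} (hσ : σ ∈ ConwayGroup B)
    (hv : v ∈ minimalSet B t) : σ.mulVec v ∈ minimalSet B t := by
  rw [mem_min] at *
  intro u hu
  rw [CG_pair hσ]
  have := hv (σ⁻¹.mulVec u) (by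
    have := hu.act σ⁻¹
    rwa [inv_mulVec_CG hσ] at this)
  rwa [CG_pair (inv_mem_CG hσ)] at this

lemma min_eq {t : ℕ} {v u : LV} (hv : v ∈ minimalSet B t) (hu : u ∈ minimalSet B t)
    (h : cong t v u) : pairZ B v v = pairZ B u u :=
  le_antisymm (mem_min.1 hv _ h.symm) (mem_min.1 hu _ h)

/-! Welch bound -/

lemma psd_real (hB : IsLeech B) (x : Fin 24 → ℝ) :
    0 ≤ x ⬝ᵥ (B.map (Int.cast : ℤ → ℝ)).mulVec x := by
  have hQ : ∀ y : Fin 24 → ℚ, 0 ≤ y ⬝ᵥ (B.map (Int.cast : ℤ → ℚ)).mulVec y := by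
    intro y
    obtain ⟨d, hd⟩ := IsLocalization.exist_integer_multiples_of_finite
      (nonZeroDivisors ℤ) y
    choose v hv using hd
    have hd0 : ((d : ℤ) : ℚ) ≠ 0 := by
      exact_mod_cast nonZeroDivisors.ne_zero d.2
    have hy : (((d : ℤ) : ℚ) • y) = fun i => ((v i : ℤ) : ℚ) := by
      ext i
      have := hv i
      simp at this
      simp [this]
    have h1 := pz_nonneg hB v
    have h2 : ((pairZ B v v : ℤ) : ℚ) = ((d : ℤ) : ℚ) ^ 2 *
        (y ⬝ᵥ (B.map (Int.cast : ℤ → ℚ)).mulVec y) := by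
      have : ((pairZ B v v : ℤ) : ℚ) = (((d : ℤ) : ℚ) • y) ⬝ᵥ
          (B.map (Int.cast : ℤ → ℚ)).mulVec (((d : ℤ) : ℚ) • y) := by
        rw [hy]
        simp [pairZ, dotProduct, Matrix.mulVec]
      rw [this, Matrix.mulVec_smul, smul_dotProduct, dotProduct_smul]
      simp only [smul_eq_mul]
      ring
    have h3 : (0 : ℚ) ≤ ((pairZ B v v : ℤ) : ℚ) := by exact_mod_cast h1
    rw [h2] at h3
    have h4 : 0 < ((d : ℤ) : ℚ) ^ 2 := by positivity
    exact nonneg_of_mul_nonneg_right h3 h4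
  have hd : DenseRange (fun (y : Fin 24 → ℚ) (i : Fin 24) => ((y i : ℚ) : ℝ)) :=
    DenseRange.piMap (fun _ => Rat.denseRange_cast)
  have hc : IsClosed {x : Fin 24 → ℝ | 0 ≤ x ⬝ᵥ (B.map (Int.cast : ℤ → ℝ)).mulVec x} := by
    apply isClosed_le continuous_const
    simp only [dotProduct, Matrix.mulVec]
    fun_prop
  refine hd.induction_on (p := fun x => 0 ≤ x ⬝ᵥ (B.map (Int.cast : ℤ → ℝ)).mulVec x) x hc ?_
  intro y
  have := hQ y
  have h2 : ((y ⬝ᵥ (B.map (Int.cast : ℤ → ℚ)).mulVec y : ℚ) : ℝ) =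
      (fun i => ((y i : ℚ) : ℝ)) ⬝ᵥ (B.map (Int.cast : ℤ → ℝ)).mulVec
        (fun i => ((y i : ℚ) : ℝ)) := by
    simp [dotProduct, Matrix.mulVec]
  rw [← h2]
  exact_mod_cast this

lemma welch_std (F : Finset LV) (f : LV → Fin 24 → ℝ) :
    (∑ v ∈ F, f v ⬝ᵥ f v) ^ 2 ≤ 24 * ∑ v ∈ F, ∑ u ∈ F, (f v ⬝ᵥ f u) ^ 2 := by
  let N : Fin 24 → Fin 24 → ℝ := fun i j => ∑ v ∈ F, f v i * f v j
  have h1 : ∑ v ∈ F, f v ⬝ᵥ f v = ∑ i, N i i := by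
    simp only [dotProduct, N]
    rw [Finset.sum_comm]
  have h2 : ∑ v ∈ F, ∑ u ∈ F, (f v ⬝ᵥ f u) ^ 2 = ∑ i, ∑ j, N i j ^ 2 := by
    have e1 : ∀ v u, (f v ⬝ᵥ f u) ^ 2 = ∑ i, ∑ j, (f v i * f v j) * (f u i * f u j) := by
      intro v u
      rw [sq, dotProduct, Finset.sum_mul_sum]
      refine Finset.sum_congr rfl fun i _ => Finset.sum_congr rfl fun j _ => by ring
    have e2 : ∀ i j, N i j ^ 2 = ∑ v ∈ F, ∑ u ∈ F, (f v i * f v j) * (f u i * f u j) := by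
      intro i j
      simp only [N]
      rw [sq, Finset.sum_mul_sum]
    simp only [e1, e2]
    calc _ = ∑ v ∈ F, ∑ i, ∑ u ∈ F, ∑ j, (f v i * f v j) * (f u i * f u j) :=
          Finset.sum_congr rfl fun v _ => Finset.sum_comm
      _ = ∑ i, ∑ v ∈ F, ∑ u ∈ F, ∑ j, (f v i * f v j) * (f u i * f u j) := Finset.sum_comm
      _ = ∑ i, ∑ v ∈ F, ∑ j, ∑ u ∈ F, (f v i * f v j) * (f u i * f u j) :=
          Finset.sum_congr rfl fun i _ => Finset.sum_congr rfl fun v _ => Finset.sum_comm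
      _ = _ := Finset.sum_congr rfl fun i _ => Finset.sum_comm
  rw [h1, h2]
  have h3 : (∑ i, N i i) ^ 2 ≤ 24 * ∑ i, N i i ^ 2 := by
    have := sq_sum_le_card_mul_sum_sq (s := Finset.univ) (f := fun i : Fin 24 => N i i)
    simpa using this
  have h4 : ∑ i, N i i ^ 2 ≤ ∑ i, ∑ j, N i j ^ 2 :=
    Finset.sum_le_sum fun i _ =>
      Finset.single_le_sum (f := fun j => N i j ^ 2) (fun j _ => sq_nonneg _) (Finset.mem_univ i)
  linarith

open scoped MatrixOrder Matrix.Norms.L2Operator in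
lemma welch (hB : IsLeech B) (F : Finset LV) :
    (∑ v ∈ F, pairZ B v v) ^ 2 ≤ 24 * ∑ v ∈ F, ∑ u ∈ F, (pairZ B v u) ^ 2 := by
  have hpsd : (B.map (Int.cast : ℤ → ℝ)).PosSemidef := by
    refine Matrix.PosSemidef.of_dotProduct_mulVec_nonneg ?_ ?_
    · have h : Bᵀ = B := hB.1
      ext i j
      have := congrFun (congrFun h i) j
      simp only [Matrix.transpose_apply] at this
      simp [this]
    · intro x
      simpa using psd_real hB x
  obtain ⟨P, hP⟩ := CStarAlgebra.nonneg_iff_eq_star_mul_self.mp hpsd.nonneg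
  rw [Matrix.star_eq_conjTranspose] at hP
  have key : ∀ v u : LV, ((pairZ B v u : ℤ) : ℝ) =
      (P.mulVec fun i => (v i : ℝ)) ⬝ᵥ (P.mulVec fun i => (u i : ℝ)) := by
    intro v u
    have : ((pairZ B v u : ℤ) : ℝ) =
        (fun i => (v i : ℝ)) ⬝ᵥ (B.map (Int.cast : ℤ → ℝ)).mulVec (fun i => (u i : ℝ)) := by
      simp [pairZ, dotProduct, Matrix.mulVec]
    rw [this, hP, ← Matrix.mulVec_mulVec, dotProduct_mulVec, ← Matrix.mulVec_transpose]
    simp [Matrix.conjTranspose]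
    rfl
  have := welch_std F (fun v => P.mulVec fun i => (v i : ℝ))
  simp only [← key] at this
  exact_mod_cast this

lemma card_sum_bound (hB : IsLeech B) (F : Finset LV) (a b : ℤ) (h : ∀ v ∈ F, pairZ B v v = a)
    (h' : ∀ v ∈ F, ∀ u ∈ F, v ≠ u → pairZ B v u = -b) :
    0 ≤ (F.card : ℤ) * (a + b - b * F.card) := by
  have h1 := pz_nonneg hB (∑ v ∈ F, v)
  have h2 : ∀ v ∈ F, ∑ u ∈ F, pairZ B v u = a + b - b * F.card := by
    intro v hv
    have : ∀ u ∈ F, pairZ B v u = -b + if v = u then a + b else 0 := by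
      intro u hu
      split_ifs with e
      · subst e; rw [h v hv]; ring
      · rw [h' v hv u hu e]; ring
    rw [Finset.sum_congr rfl this, Finset.sum_add_distrib, Finset.sum_ite_eq, if_pos hv]
    simp
    ring
  rw [pz_sum_left] at h1
  simp only [pz_sum_right hB] at h1
  rw [Finset.sum_congr rfl h2] at h1
  rw [Finset.sum_const, nsmul_eq_mul] at h1
  exact h1

lemma card_welch_bound (hB : IsLeech B) (F : Finset LV) (a M : ℤ)
    (h : ∀ v ∈ F, pairZ B v v = a)
    (h' : ∀ v ∈ F, ∑ u ∈ F, pairZ B v u ^ 2 ≤ M) :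
    (a * F.card) ^ 2 ≤ 24 * (M * F.card) := by
  have h1 := welch hB F
  rw [Finset.sum_congr rfl h] at h1
  have h2 := Finset.sum_le_sum h'
  simp only [Finset.sum_const, nsmul_eq_mul] at h1 h2
  nlinarith

/-! counting framework -/

lemma count_abs {ι β : Type*} [Fintype ι] [Fintype β] [DecidableEq β]
    (f : LV → β) (S : ι → Finset LV) (c n : ι → ℕ) (hc : ∀ i, 0 < c i)
    (hcard : ∀ i, (S i).card = c i * n i)
    (hfib : ∀ i, ∀ b, ((S i).filter (fun v => f v = b)).card ≤ c i)
    (hdisj : ∀ i j u v, u ∈ S i → v ∈ S j → f u = f v → i = j)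
    (hsum : ∑ i, n i = Fintype.card β) :
    (∀ b, ∃ i, ∃ v ∈ S i, f v = b) ∧
    ∀ i, ∀ v ∈ S i, ((S i).filter (fun u => f u = f v)).card = c i := by
  classical
  have h1 : ∀ i, n i ≤ ((S i).image f).card := by
    intro i
    have := Finset.card_le_mul_card_image (f := f) (S i) (c i) (fun b _ => hfib i b)
    rw [hcard i] at this
    exact Nat.le_of_mul_le_mul_left this (hc i)
  have hd : ((Finset.univ : Finset ι) : Set ι).PairwiseDisjoint (fun i => (S i).image f) := by
    intro i _ j _ hij
    rw [Function.onFun, Finset.disjoint_left]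
    intro b hb hb'
    obtain ⟨u, hu, rfl⟩ := Finset.mem_image.1 hb
    obtain ⟨v, hv, e⟩ := Finset.mem_image.1 hb'
    exact hij (hdisj i j u v hu hv e.symm)
  have h2 : (Finset.univ.biUnion (fun i => (S i).image f)).card =
      ∑ i, ((S i).image f).card := Finset.card_biUnion hd
  have h3 : (Finset.univ.biUnion (fun i => (S i).image f)).card ≤ Fintype.card β :=
    Finset.card_le_univ _
  have h4 : ∑ i, n i ≤ ∑ i, ((S i).image f).card := Finset.sum_le_sum fun i _ => h1 i
  have h5 : ∑ i, n i = ∑ i, ((S i).image f).card := by omega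
  have h6 := (Finset.sum_eq_sum_iff_of_le (fun i _ => h1 i)).1 h5
  constructor
  · have : Finset.univ.biUnion (fun i => (S i).image f) = Finset.univ := by
      apply (Finset.card_eq_iff_eq_univ _).1
      omega
    intro b
    have hb : b ∈ Finset.univ.biUnion (fun i => (S i).image f) := by rw [this]; simp
    obtain ⟨i, _, hi⟩ := Finset.mem_biUnion.1 hb
    obtain ⟨v, hv, e⟩ := Finset.mem_image.1 hi
    exact ⟨i, v, hv, e⟩
  · intro i v hv
    have h7 := Finset.card_eq_sum_card_image f (S i)
    have h8 : ∑ b ∈ (S i).image f, ((S i).filter (fun u => f u = b)).card =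
        ∑ b ∈ (S i).image f, c i := by
      rw [← h7, hcard i, h6 i (Finset.mem_univ _), Finset.sum_const, smul_eq_mul, mul_comm]
    exact (Finset.sum_eq_sum_iff_of_le (fun b _ => hfib i b)).1 h8 _
      (Finset.mem_image_of_mem _ hv)

theorem framework {ι : Type*} [Fintype ι] (t : ℕ) [NeZero t]
    (S : ι → Set LV) (x : ι → ℤ) (c n : ι → ℕ) (hc : ∀ i, 0 < c i) (hn : ∀ i, 0 < n i)
    (horb : ∀ i, IsOrb B (S i)) (hq : ∀ i, ∀ v ∈ S i, pairZ B v v = x i)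
    (hcard : ∀ i, Nat.card (S i) = c i * n i)
    (hmin : ∀ i, S i ⊆ minimalSet B t)
    (hdisj : ∀ i j u v, u ∈ S i → v ∈ S j → cong t u v → i = j)
    (hbound : ∀ i, ∀ F : Finset LV,
      (∀ v ∈ F, v ∈ minimalSet B t ∧ pairZ B v v = x i ∧ ∃ u ∈ S i, cong t v u) →
      (∀ v ∈ F, ∀ u ∈ F, cong t v u) → F.card ≤ c i)
    (hsum : ∑ i, n i = t ^ 24) :
    sRank B t = Fintype.card ι ∧ minimalSet B t = ⋃ i, S i ∧
      ∀ R : Finset LV, IsRepSystem B t R → ∀ g : ℤ → ℤ,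
        ∑ v ∈ R, g (pairZ B v v) = ∑ i, g (x i) := by
  classical
  have hfin : ∀ i, (S i).Finite := by
    intro i
    have : Nat.card (S i) ≠ 0 := by
      rw [hcard i]; exact (Nat.mul_pos (hc i) (hn i)).ne'
    exact Nat.finite_of_card_ne_zero this
  let T : ι → Finset LV := fun i => (hfin i).toFinset
  have hT : ∀ i v, v ∈ T i ↔ v ∈ S i := fun i v => (hfin i).mem_toFinset
  have main := count_abs (redT t) T c n hc
    (by
      intro i
      rw [← hcard i, Nat.card_coe_set_eq, Set.ncard_eq_toFinset_card _ (hfin i)])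
    (by
      intro i b
      apply hbound i
      · intro v hv
        have hv' := (hT i v).1 (Finset.mem_filter.1 hv).1
        exact ⟨hmin i hv', hq i v hv', v, hv', cong.rfl'⟩
      · intro v hv u hu
        apply redT_eq.1
        rw [(Finset.mem_filter.1 hv).2, (Finset.mem_filter.1 hu).2])
    (by
      intro i j u v hu hv e
      exact hdisj i j u v ((hT _ _).1 hu) ((hT _ _).1 hv) (redT_eq.1 e))
    (by rw [hsum]; simp [ZMod.card])
  obtain ⟨m1, m2⟩ := main
  have hset : ∀ v, v ∈ minimalSet B t → ∃ i, v ∈ S i := by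
    intro v hv
    obtain ⟨i, u, hu, e⟩ := m1 (redT t v)
    refine ⟨i, ?_⟩
    by_contra hvS
    have huS := (hT _ _).1 hu
    have e' := redT_eq.1 e
    have hvT : v ∉ (T i).filter (fun z => redT t z = redT t u) := by
      intro h
      exact hvS ((hT _ _).1 (Finset.mem_filter.1 h).1)
    have h1 := hbound i (insert v ((T i).filter (fun z => redT t z = redT t u)))
      (by
        intro z hz
        rcases Finset.mem_insert.1 hz with rfl | hz
        · exact ⟨hv, by rw [← hq i u huS]; exact min_eq hv (hmin i huS) e'.symm,
            u, huS, e'.symm⟩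
        · have hz' := (hT i z).1 (Finset.mem_filter.1 hz).1
          exact ⟨hmin i hz', hq i z hz', z, hz', cong.rfl'⟩)
      (by
        have : ∀ z ∈ insert v ((T i).filter (fun z => redT t z = redT t u)),
            redT t z = redT t u := by
          intro z hz
          rcases Finset.mem_insert.1 hz with rfl | hz
          · exact e.symm
          · exact (Finset.mem_filter.1 hz).2
        intro z hz w hw
        exact redT_eq.1 ((this z hz).trans (this w hw).symm))
    rw [Finset.card_insert_of_notMem hvT, m2 i u hu] at h1
    omega
  choose idx hidx using hset
  have huniq : ∀ v (hv : v ∈ minimalSet B t) i, v ∈ S i → idx v hv = i :=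
    fun v hv i hi => hdisj _ _ v v (hidx v hv) hi cong.rfl'
  have hconj : ∀ v u (hv : v ∈ minimalSet B t) (hu : u ∈ minimalSet B t),
      conjModT B t v u ↔ idx v hv = idx u hu := by
    intro v u hv hu
    constructor
    · rintro ⟨σ, hσ, w, hw⟩
      exact hdisj _ _ v (σ.mulVec u) (hidx v hv) ((horb _).act hσ (hidx u hu)) ⟨w, hw⟩
    · intro e
      have h1 := hidx v hv
      rw [e] at h1
      obtain ⟨σ, hσ, rfl⟩ := (horb _).trans (hidx u hu) h1
      exact ⟨σ, hσ, 0, by simp⟩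
  refine ⟨?_, ?_, ?_⟩
  · have hbij : Function.Bijective (Quot.lift
        (r := fun v u : minimalSet B t => conjModT B t v.1 u.1)
        (fun v : minimalSet B t => idx v.1 v.2)
        (fun v u h => (hconj v.1 u.1 v.2 u.2).1 h)) := by
      constructor
      · rintro ⟨v⟩ ⟨u⟩ h
        exact Quot.sound ((hconj v.1 u.1 v.2 u.2).2 h)
      · intro i
        obtain ⟨v, hv⟩ := (horb i).nonempty
        exact ⟨Quot.mk _ ⟨v, hmin i hv⟩, huniq v _ i hv⟩
    rw [sRank, Nat.card_congr (Equiv.ofBijective _ hbij), Nat.card_eq_fintype_card]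
  · ext v
    rw [Set.mem_iUnion]
    exact ⟨fun hv => ⟨_, hidx v hv⟩, fun ⟨i, hi⟩ => hmin i hi⟩
  · rintro R ⟨hR, hR'⟩ g
    refine Finset.sum_bij (fun v hv => idx v (hR hv)) (fun _ _ => Finset.mem_univ _) ?_ ?_ ?_
    · intro v hv u hu e
      have h1 := (hconj v u (hR hv) (hR hu)).2 e
      have h2 := (hconj v v (hR hv) (hR hv)).2 rfl
      exact (hR' v (hR hv)).unique ⟨hv, h2⟩ ⟨hu, h1⟩
    · intro i _
      obtain ⟨v, hv⟩ := (horb i).nonempty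
      obtain ⟨r, ⟨hr, hr'⟩, _⟩ := hR' v (hmin i hv)
      refine ⟨r, hr, ?_⟩
      rw [← (hconj v r (hmin i hv) (hR hr)).1 hr']
      exact huniq v _ i hv
    · intro v hv
      rw [hq _ v (hidx v (hR hv))]

/-! index two -/

lemma core2 (hB : IsLeech B) {v u : LV} (h : cong 2 v u) (hv : pairZ B v v ≤ 8)
    (hu : pairZ B u u ≤ 8) :
    v = u ∨ v = -u ∨ (pairZ B v v = 8 ∧ pairZ B u u = 8 ∧ pairZ B v u = 0) := by
  obtain ⟨w, hw⟩ := h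
  by_cases h1 : v = u
  · exact Or.inl h1
  by_cases h2 : v = -u
  · exact Or.inr (Or.inl h2)
  have e1 : v = u + (2 : ℤ) • w := by
    rw [show (2 : ℤ) = ((2 : ℕ) : ℤ) from rfl, ← hw]; abel
  obtain ⟨a, ha, ha0, ha1, ha2⟩ := pz_type hB w
  obtain ⟨b, hb, hb0, hb1, hb2⟩ := pz_type hB (u + w)
  have ha' : a ≠ 0 := by
    intro h
    apply h1
    rw [e1, ha2 h]; simp
  have hb' : b ≠ 0 := by
    intro h
    apply h2
    have := hb2 h
    rw [e1, show w = -u from (neg_eq_of_add_eq_zero_right this).symm]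
    module
  have s := pz_symm hB w u
  have e2 : pairZ B v v = pairZ B u u + 4 * pairZ B u w + 4 * pairZ B w w := by
    rw [e1]
    simp only [pz_add_left, pz_add_right, pz_smul_left, pz_smul_right]
    rw [s]; ring
  have e3 : pairZ B (u + w) (u + w) = pairZ B u u + 2 * pairZ B u w + pairZ B w w := by
    simp only [pz_add_left, pz_add_right]
    rw [s]; ring
  have e4 : pairZ B v u = pairZ B u u + 2 * pairZ B u w := by
    rw [e1]
    simp only [pz_add_left, pz_smul_left]
    rw [s]
  right; right
  omega

lemma min2 (hB : IsLeech B) {v : LV} (hv : pairZ B v v ≤ 8) : v ∈ minimalSet B 2 := by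
  rw [mem_min]
  intro u hu
  by_contra h
  rcases core2 hB hu (by omega) hv with rfl | rfl | h3
  · omega
  · rw [pz_neg_left, pz_neg_right] at h; omega
  · omega

lemma OD_zero : OrbitData B {0} 0 1 :=
  ⟨IsOrb.zero, by
    intro v hv
    rw [Set.mem_singleton_iff.1 hv, pz_zero_left]; simp, by simp⟩

lemma card_pm (F : Finset LV) (h : ∀ v ∈ F, ∀ u ∈ F, v = u ∨ v = -u) : F.card ≤ 2 := by
  rcases F.eq_empty_or_nonempty with rfl | ⟨a, ha⟩
  · simp
  · have : F ⊆ {a, -a} := by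
      intro v hv
      simpa using h v hv a ha
    exact (Finset.card_le_card this).trans Finset.card_le_two

lemma bound8 (hB : IsLeech B) (F : Finset LV) (hF : ∀ v ∈ F, pairZ B v v = 8)
    (hc : ∀ v ∈ F, ∀ u ∈ F, cong 2 v u) : F.card ≤ 48 := by
  have h1 := card_welch_bound hB F 8 128 hF (by
    intro v hv
    have h0 : ∀ u ∈ F, pairZ B v u ^ 2 ≤ (if v = u then 64 else 0) + (if -v = u then 64 else 0) := by
      intro u hu
      rcases core2 hB (hc v hv u hu) (hF v hv).le (hF u hu).le with rfl | rfl | h3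
      · rw [if_pos rfl, hF v hv]; split_ifs <;> norm_num
      · rw [neg_neg, if_pos rfl, pz_neg_left, hF u hu]; split_ifs <;> norm_num
      · rw [h3.2.2]; split_ifs <;> norm_num
    refine (Finset.sum_le_sum h0).trans ?_
    rw [Finset.sum_add_distrib, Finset.sum_ite_eq, Finset.sum_ite_eq]
    split_ifs <;> norm_num)
  by_contra h
  have : (49 : ℤ) ≤ F.card := by exact_mod_cast (by omega : 49 ≤ F.card)
  nlinarith

theorem index2 (hB : IsLeech B) {O2 O3 O4 : Set LV}
    (h2 : OrbitData B O2 2 (3 * 65520)) (h3 : OrbitData B O3 3 (256 * 65520))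
    (h4 : OrbitData B O4 4 (6075 * 65520)) :
    sRank B 2 = 4 ∧ minimalSet B 2 = {(0 : LV)} ∪ O2 ∪ O3 ∪ O4 ∧
      (∀ R : Finset LV, IsRepSystem B 2 R →
        ∑ v ∈ R, Int.ceil ((pairZ B v v : ℚ) / (2 * 2)) = 5) := by
  have h0 := OD_zero (B := B)
  have hq : ∀ i, ∀ v ∈ (![{0}, O2, O3, O4] : Fin 4 → Set LV) i,
      pairZ B v v = (![0, 4, 6, 8] : Fin 4 → ℤ) i := by
    intro i
    fin_cases i
    · exact h0.2.1
    · exact h2.2.1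
    · exact h3.2.1
    · exact h4.2.1
  have hx : ∀ i, (![0, 4, 6, 8] : Fin 4 → ℤ) i ≤ 8 := by decide
  have hxi : ∀ i j, (![0, 4, 6, 8] : Fin 4 → ℤ) i = (![0, 4, 6, 8] : Fin 4 → ℤ) j → i = j := by
    decide
  have hmin : ∀ i, (![{0}, O2, O3, O4] : Fin 4 → Set LV) i ⊆ minimalSet B 2 :=
    fun i v hv => min2 hB (by rw [hq i v hv]; exact hx i)
  have main := framework (B := B) 2 ![{0}, O2, O3, O4] ![0, 4, 6, 8] ![1, 2, 2, 48]
    ![1, 98280, 8386560, 8292375] (by decide) (by intro i; fin_cases i <;> norm_num)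
    (by
      intro i
      fin_cases i
      · exact h0.1
      · exact h2.1
      · exact h3.1
      · exact h4.1) hq
    (by
      intro i
      fin_cases i
      · exact h0.2.2.trans (by norm_num)
      · exact h2.2.2.trans (by norm_num)
      · exact h3.2.2.trans (by norm_num)
      · exact h4.2.2.trans (by norm_num)) hmin
    (by
      intro i j u v hu hv h
      apply hxi
      rw [← hq i u hu, ← hq j v hv]
      exact min_eq (hmin i hu) (hmin j hv) h)
    (by
      intro i F hF hc
      have hpm : (![0, 4, 6, 8] : Fin 4 → ℤ) i < 8 → F.card ≤ 2 := by
        intro hlt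
        apply card_pm
        intro v hv u hu
        have e1 := (hF v hv).2.1
        have e2 := (hF u hu).2.1
        rcases core2 hB (hc v hv u hu) (by omega) (by omega) with h | h | h
        · exact Or.inl h
        · exact Or.inr h
        · omega
      fin_cases i
      · refine Finset.card_le_one.2 ?_
        have : ∀ v ∈ F, v = 0 := by
          intro v hv
          have e : pairZ B v v = 0 := (hF v hv).2.1
          obtain ⟨a, ha, _, _, h⟩ := pz_type hB v
          exact h (by omega)
        intro v hv u hu
        rw [this v hv, this u hu]
      · exact hpm (by decide)
      · exact hpm (by decide)
      · exact bound8 hB F (fun v hv => (hF v hv).2.1) hc)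
    (by simp [Fin.sum_univ_succ])
  obtain ⟨m1, m2, m3⟩ := main
  refine ⟨by simpa using m1, ?_, ?_⟩
  · rw [m2]
    ext v
    simp [Fin.exists_fin_succ, or_assoc]
  · intro R hR
    have := m3 R hR (fun y => Int.ceil ((y : ℚ) / (2 * 2)))
    rw [this]
    have hce : ∀ i, Int.ceil (((![0, 4, 6, 8] : Fin 4 → ℤ) i : ℚ) / (2 * 2)) =
        (![0, 1, 2, 2] : Fin 4 → ℤ) i := by
      intro i
      rw [Int.ceil_eq_iff]
      fin_cases i <;> norm_num
    exact (Finset.sum_congr rfl fun i _ => hce i).trans (by decide)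

/-! index three -/

lemma core3 (hB : IsLeech B) {v u : LV} (h : cong 3 v u) (hne : v ≠ u) {a b : ℤ}
    (ha : pairZ B v v = 2 * a) (hb : pairZ B u u = 2 * b) :
    ∃ (w : LV) (m n n' : ℤ), v = u + (3 : ℤ) • w ∧ pairZ B w w = 2 * m ∧ 2 ≤ m ∧
      pairZ B (v - w) (v - w) = 2 * n ∧ pairZ B (u + w) (u + w) = 2 * n' ∧
      0 ≤ n ∧ n ≠ 1 ∧ 0 ≤ n' ∧ n' ≠ 1 ∧ 2 * a + b = 6 * m + 3 * n ∧
      a + 2 * b = 6 * m + 3 * n' ∧ pairZ B v u = a + b - 9 * m ∧ (n = 0 → a = m) ∧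
      (n' = 0 → b = m) := by
  obtain ⟨w, hw⟩ := h
  have e1 : v = u + (3 : ℤ) • w := by
    rw [show (3 : ℤ) = ((3 : ℕ) : ℤ) from rfl, ← hw]; abel
  obtain ⟨m, hm, hm0, hm1, hm2⟩ := pz_type hB w
  obtain ⟨n, hn, hn0, hn1, hn2⟩ := pz_type hB (v - w)
  obtain ⟨n', hn', hn0', hn1', hn2'⟩ := pz_type hB (u + w)
  have hm' : m ≠ 0 := by
    intro h
    apply hne
    rw [e1, hm2 h]; simp
  have s := pz_symm hB w u
  have e2 : pairZ B v v = pairZ B u u + 6 * pairZ B u w + 9 * pairZ B w w := by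
    rw [e1]
    simp only [pz_add_left, pz_add_right, pz_smul_left, pz_smul_right]
    rw [s]; ring
  have e3 : pairZ B (u + w) (u + w) = pairZ B u u + 2 * pairZ B u w + pairZ B w w := by
    simp only [pz_add_left, pz_add_right]
    rw [s]; ring
  have e5 : pairZ B (v - w) (v - w) = pairZ B u u + 4 * pairZ B u w + 4 * pairZ B w w := by
    rw [e1]
    simp only [pz_add_left, pz_add_right, pz_sub_left, pz_sub_right, pz_smul_left, pz_smul_right]
    rw [s]; ring
  have e4 : pairZ B v u = pairZ B u u + 3 * pairZ B u w := by
    rw [e1]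
    simp only [pz_add_left, pz_smul_left]
    rw [s]
  refine ⟨w, m, n, n', e1, hm, by omega, hn, hn', hn0, hn1, hn0', hn1', by omega, by omega,
    by omega, ?_, ?_⟩
  · intro h
    have := sub_eq_zero.1 (hn2 h)
    rw [this] at ha
    omega
  · intro h
    have := eq_neg_of_add_eq_zero_left (hn2' h)
    rw [this, pz_neg_left, pz_neg_right] at hb
    omega

lemma min3 (hB : IsLeech B) {v : LV} (hv : pairZ B v v ≤ 14) : v ∈ minimalSet B 3 := by
  rw [mem_min]
  intro u hu
  by_contra h
  obtain ⟨a, ha, ha0, ha1, _⟩ := pz_type hB v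
  obtain ⟨b, hb, hb0, hb1, _⟩ := pz_type hB u
  obtain ⟨w, m, n, n', h⟩ := core3 hB hu.symm (by rintro rfl; omega) ha hb
  omega

lemma half_count (X Y : Finset LV) (hX : ∀ x ∈ X, -x ∈ X) (k : ℤ) (hk : k ≠ 0) :
    2 * ((X ×ˢ Y).filter (fun p => pairZ B p.1 p.2 = k)).card ≤ X.card * Y.card := by
  have h1 : ((X ×ˢ Y).filter (fun p => pairZ B p.1 p.2 = k)).card ≤
      ((X ×ˢ Y).filter (fun p => pairZ B p.1 p.2 = -k)).card := by
    apply Finset.card_le_card_of_injOn (fun p => (-p.1, p.2))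
    · intro p hp
      have hp' := Finset.mem_filter.1 (Finset.mem_coe.1 hp)
      have hp2 := Finset.mem_product.1 hp'.1
      refine Finset.mem_coe.2 (Finset.mem_filter.2 ⟨Finset.mem_product.2 ⟨hX _ hp2.1, hp2.2⟩, ?_⟩)
      simp only [pz_neg_left, hp'.2]
    · intro p _ q _ e
      simp only [Prod.mk.injEq, neg_inj] at e
      exact Prod.ext e.1 e.2
  have h2 : Disjoint ((X ×ˢ Y).filter (fun p => pairZ B p.1 p.2 = k))
      ((X ×ˢ Y).filter (fun p => pairZ B p.1 p.2 = -k)) := by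
    rw [Finset.disjoint_left]
    intro p hp hp'
    have e1 := (Finset.mem_filter.1 hp).2
    have e2 := (Finset.mem_filter.1 hp').2
    omega
  have h3 := Finset.card_le_card (Finset.union_subset
    (Finset.filter_subset (fun p : LV × LV => pairZ B p.1 p.2 = k) (X ×ˢ Y))
    (Finset.filter_subset (fun p : LV × LV => pairZ B p.1 p.2 = -k) (X ×ˢ Y)))
  rw [Finset.card_union_of_disjoint h2, Finset.card_product] at h3
  omega

lemma orbit_avoid {S : Set LV} (hS : IsOrb B S) (P : LV → Prop)
    (hP : ∀ σ ∈ ConwayGroup B, ∀ v, P v → P (σ.mulVec v)) (I : Finset LV)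
    (hI : ∀ v, P v → v ∈ I) (hlt : I.card < Nat.card S) : ∀ v ∈ S, ¬ P v := by
  intro v hv hPv
  have h1 : S ⊆ (I : Set LV) := by
    intro u hu
    obtain ⟨σ, hσ, rfl⟩ := hS.trans hv hu
    exact hI _ (hP σ hσ v hPv)
  have h2 := Set.ncard_le_ncard h1 I.finite_toSet
  rw [Set.ncard_coe_finset, ← Nat.card_coe_set_eq] at h2
  omega

lemma not_min {v : LV} {t : ℕ} (h : v ∉ minimalSet B t) :
    ∃ u, cong t v u ∧ pairZ B u u < pairZ B v v := by
  rw [mem_min] at h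
  push Not at h
  obtain ⟨u, hu, h⟩ := h
  exact ⟨u, hu.symm, h⟩

lemma avoid6 (hB : IsLeech B) (T2 : Finset LV) (hT : ∀ v, v ∈ T2 ↔ pairZ B v v = 4)
    (hT2 : T2.card = 3 * 65520) {S : Set LV} (hS : IsOrb B S)
    (hcard : Nat.card S = 518400 * 65520) :
    ∀ v ∈ S, ∀ u, pairZ B v v = 12 → cong 3 v u → pairZ B u u = 12 → v = u := by
  have main := orbit_avoid hS
    (fun v => pairZ B v v = 12 ∧ ∃ u, cong 3 v u ∧ pairZ B u u = 12 ∧ v ≠ u)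
    (by
      rintro σ hσ v ⟨hv, u, hc, hu, hne⟩
      refine ⟨by rw [CG_pair hσ, hv], σ.mulVec u, hc.act σ, by rw [CG_pair hσ, hu], ?_⟩
      intro e
      apply hne
      rw [← inv_mulVec_CG hσ v, e, inv_mulVec_CG hσ])
    (((T2 ×ˢ T2).filter (fun p => pairZ B p.1 p.2 = 2)).image (fun p => p.1 + p.2))
    (by
      rintro v ⟨hv, u, hc, hu, hne⟩
      obtain ⟨w, m, n, n', e1, h⟩ := core3 hB (a := 6) (b := 6) hc hne (by omega) (by omega)
      have hw : pairZ B w w = 4 := by omega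
      have hx : pairZ B (v - w) (v - w) = 4 := by omega
      refine Finset.mem_image.2 ⟨(v - w, w), Finset.mem_filter.2
        ⟨Finset.mem_product.2 ⟨(hT _).2 hx, (hT _).2 hw⟩, ?_⟩, by simp⟩
      have s := pz_symm hB w v
      simp only [pz_sub_left, pz_sub_right] at hx ⊢
      omega)
    (by
      have h1 := half_count (B := B) T2 T2
        (fun x hx => by
          rw [hT] at *
          rw [pz_neg_left, pz_neg_right, hx]; norm_num) 2 (by norm_num)
      rw [hT2] at h1
      have h2 := Finset.card_image_le (s := (T2 ×ˢ T2).filter (fun p => pairZ B p.1 p.2 = 2))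
        (f := fun p => p.1 + p.2)
      rw [hcard]
      omega)
  intro v hv u h1 h2 h3
  by_contra hne
  exact main v hv ⟨h1, u, h2, h3, hne⟩

lemma avoid8 (hB : IsLeech B) (T2 : Finset LV) (hT : ∀ v, v ∈ T2 ↔ pairZ B v v = 4)
    (hT2 : T2.card = 3 * 65520) {S : Set LV} (hS : IsOrb B S)
    (hcard : Nat.card S = 12295800 * 65520) :
    ∀ v ∈ S, pairZ B v v = 16 → v ∈ minimalSet B 3 := by
  have main := orbit_avoid hS
    (fun v => pairZ B v v = 16 ∧ v ∉ minimalSet B 3)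
    (by
      rintro σ hσ v ⟨hv, hm⟩
      refine ⟨by rw [CG_pair hσ, hv], fun h => hm ?_⟩
      have := min_act (inv_mem_CG hσ) h
      rwa [inv_mulVec_CG hσ] at this)
    (((insert 0 T2) ×ˢ T2).image (fun p => p.1 + (2 : ℤ) • p.2))
    (by
      rintro v ⟨hv, hm⟩
      obtain ⟨u, hc, hlt⟩ := not_min hm
      obtain ⟨b, hb, hb0, hb1, _⟩ := pz_type hB u
      obtain ⟨w, m, n, n', e1, h⟩ := core3 hB (a := 8) hc (by rintro rfl; omega) (by omega) hb
      have hw : pairZ B w w = 4 := by omega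
      have hx : pairZ B (u + w) (u + w) = 4 ∨ pairZ B (u + w) (u + w) = 0 := by omega
      refine Finset.mem_image.2 ⟨(u + w, w), Finset.mem_product.2 ⟨?_, (hT _).2 hw⟩, ?_⟩
      · rcases hx with hx | hx
        · exact Finset.mem_insert_of_mem ((hT _).2 hx)
        · obtain ⟨a, ha, _, _, h0⟩ := pz_type hB (u + w)
          rw [h0 (by omega)]
          exact Finset.mem_insert_self _ _
      · simp only
        rw [e1]; module)
    (by
      have h2 := Finset.card_image_le (s := (insert 0 T2) ×ˢ T2)
        (f := fun p => p.1 + (2 : ℤ) • p.2)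
      have h3 := Finset.card_insert_le 0 T2
      rw [Finset.card_product] at h2
      rw [hT2] at h2 h3
      rw [hcard]
      omega)
  intro v hv h1
  by_contra hne
  exact main v hv ⟨h1, hne⟩

lemma avoid9 (hB : IsLeech B) (T2 T3 : Finset LV) (hT : ∀ v, v ∈ T2 ↔ pairZ B v v = 4)
    (hT' : ∀ v, v ∈ T3 ↔ pairZ B v v = 6)
    (hT2 : T2.card = 3 * 65520) (hT3 : T3.card = 256 * 65520) {S : Set LV} (hS : IsOrb B S)
    (hcard : Nat.card S = 32972800 * 65520) :
    ∀ v ∈ S, pairZ B v v = 18 → v ∈ minimalSet B 3 := by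
  have main := orbit_avoid hS
    (fun v => pairZ B v v = 18 ∧ v ∉ minimalSet B 3)
    (by
      rintro σ hσ v ⟨hv, hm⟩
      refine ⟨by rw [CG_pair hσ, hv], fun h => hm ?_⟩
      have := min_act (inv_mem_CG hσ) h
      rwa [inv_mulVec_CG hσ] at this)
    (((T3 ×ˢ T2).filter (fun p => pairZ B p.1 p.2 = -1)).image (fun p => p.1 + (2 : ℤ) • p.2))
    (by
      rintro v ⟨hv, hm⟩
      obtain ⟨u, hc, hlt⟩ := not_min hm
      obtain ⟨b, hb, hb0, hb1, _⟩ := pz_type hB u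
      obtain ⟨w, m, n, n', e1, h⟩ := core3 hB (a := 9) hc (by rintro rfl; omega) (by omega) hb
      have hw : pairZ B w w = 4 := by omega
      have hx : pairZ B (u + w) (u + w) = 6 := by omega
      have hvx : v = (u + w) + (2 : ℤ) • w := by rw [e1]; module
      refine Finset.mem_image.2 ⟨(u + w, w), Finset.mem_filter.2
        ⟨Finset.mem_product.2 ⟨(hT' _).2 hx, (hT _).2 hw⟩, ?_⟩, hvx.symm⟩
      generalize u + w = y at hx hvx ⊢
      subst hvx
      have s := pz_symm hB w y
      simp only [pz_add_left, pz_add_right, pz_smul_left, pz_smul_right] at hv ⊢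
      omega)
    (by
      have h1 := half_count (B := B) T3 T2
        (fun x hx => by
          rw [hT'] at *
          rw [pz_neg_left, pz_neg_right, hx]; norm_num) (-1) (by norm_num)
      rw [hT2, hT3] at h1
      have h2 := Finset.card_image_le (s := (T3 ×ˢ T2).filter (fun p => pairZ B p.1 p.2 = -1))
        (f := fun p => p.1 + (2 : ℤ) • p.2)
      rw [hcard]
      omega)
  intro v hv h1
  by_contra hne
  exact main v hv ⟨h1, hne⟩

/-! fibre bounds, index three -/

lemma bound3_small (hB : IsLeech B) (F : Finset LV) (x : ℤ) (hx : x < 12)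
    (hF : ∀ v ∈ F, pairZ B v v = x) (hc : ∀ v ∈ F, ∀ u ∈ F, cong 3 v u) : F.card ≤ 1 := by
  refine Finset.card_le_one.2 ?_
  intro v hv u hu
  by_contra hne
  obtain ⟨a, ha, ha0, ha1, _⟩ := pz_type hB v
  have e1 := hF v hv
  have e2 := hF u hu
  obtain ⟨w, m, n, n', h⟩ := core3 hB (hc v hv u hu) hne ha (b := a) (by omega)
  omega

lemma bound3_6 (hB : IsLeech B) (F : Finset LV)
    (hF : ∀ v ∈ F, pairZ B v v = 12) (hc : ∀ v ∈ F, ∀ u ∈ F, cong 3 v u) : F.card ≤ 3 := by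
  have h := card_sum_bound hB F 12 6 hF (by
    intro v hv u hu hne
    have e1 := hF v hv
    have e2 := hF u hu
    obtain ⟨w, m, n, n', h⟩ := core3 hB (a := 6) (b := 6) (hc v hv u hu) hne (by omega) (by omega)
    have hm : m = 2 := by omega
    omega)
  by_contra h'
  have : (4 : ℤ) ≤ F.card := by exact_mod_cast (by omega : 4 ≤ F.card)
  nlinarith

lemma triple3 (hB : IsLeech B) {v u z : LV} (h1 : cong 3 u v) (h2 : cong 3 z v) :
    ∃ a : ℤ, a ≠ 1 ∧ pairZ B v v + pairZ B u u + pairZ B z z + 2 * pairZ B v u +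
      2 * pairZ B v z + 2 * pairZ B u z = 18 * a := by
  obtain ⟨w, hw⟩ := h1
  obtain ⟨y, hy⟩ := h2
  obtain ⟨a, ha, _, ha1, _⟩ := pz_type hB (v + w + y)
  have e : v + u + z = (3 : ℤ) • (v + w + y) := by
    have e1 : u = v + (3 : ℤ) • w := by
      rw [show (3 : ℤ) = ((3 : ℕ) : ℤ) from rfl, ← hw]; abel
    have e2 : z = v + (3 : ℤ) • y := by
      rw [show (3 : ℤ) = ((3 : ℕ) : ℤ) from rfl, ← hy]; abel
    rw [e1, e2]; module
  refine ⟨a, ha1, ?_⟩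
  have h3 : pairZ B (v + u + z) (v + u + z) = 9 * pairZ B (v + w + y) (v + w + y) := by
    rw [e, pz_smul_left, pz_smul_right]; ring
  rw [ha] at h3
  simp only [pz_add_left (B := B) v u, pz_add_left (B := B) (v + u) z, pz_add_right] at h3
  have s1 := pz_symm hB u v
  have s2 := pz_symm hB z v
  have s3 := pz_symm hB z u
  omega

lemma bound3_7 (hB : IsLeech B) (F : Finset LV)
    (hF : ∀ v ∈ F, pairZ B v v = 14) (hc : ∀ v ∈ F, ∀ u ∈ F, cong 3 v u) : F.card ≤ 2 := by
  have hp : ∀ v ∈ F, ∀ u ∈ F, v ≠ u → pairZ B v u = -4 := by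
    intro v hv u hu hne
    have e1 := hF v hv
    have e2 := hF u hu
    obtain ⟨w, m, n, n', h⟩ := core3 hB (a := 7) (b := 7) (hc v hv u hu) hne (by omega) (by omega)
    have hm : m = 2 := by omega
    omega
  by_contra h'
  obtain ⟨v, u, z, hv, hu, hz, h1, h2, h3⟩ := Finset.two_lt_card_iff.1 (by omega : 2 < F.card)
  obtain ⟨a, ha, e⟩ := triple3 hB (hc u hu v hv) (hc z hz v hv)
  rw [hF v hv, hF u hu, hF z hz, hp v hv u hu h1, hp v hv z hz h2, hp u hu z hz h3] at e
  omega

lemma bound3_8 (hB : IsLeech B) (F : Finset LV) (hm : ∀ v ∈ F, v ∈ minimalSet B 3)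
    (hF : ∀ v ∈ F, pairZ B v v = 16) (hc : ∀ v ∈ F, ∀ u ∈ F, cong 3 v u) : F.card ≤ 9 := by
  have h := card_sum_bound hB F 16 2 hF (by
    intro v hv u hu hne
    have e1 := hF v hv
    have e2 := hF u hu
    obtain ⟨w, m, n, n', h⟩ := core3 hB (a := 8) (b := 8) (hc v hv u hu) hne (by omega) (by omega)
    have hm' : m = 2 ∨ m = 3 := by omega
    rcases hm' with rfl | rfl
    · omega
    · exfalso
      have h1 := mem_min.1 (hm v hv) (v - (3 : ℤ) • (v - w)) ⟨-(v - w), by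
        push_cast; module⟩
      have hx : pairZ B (v - w) (v - w) = 4 := by omega
      have hw : pairZ B w w = 6 := by omega
      have s := pz_symm hB w v
      simp only [pz_sub_left, pz_sub_right, pz_smul_left, pz_smul_right] at h1 hx
      omega)
  by_contra h'
  have : (10 : ℤ) ≤ F.card := by exact_mod_cast (by omega : 10 ≤ F.card)
  nlinarith

lemma bound3_9 (hB : IsLeech B) (F : Finset LV)
    (hF : ∀ v ∈ F, pairZ B v v = 18) (hc : ∀ v ∈ F, ∀ u ∈ F, cong 3 v u) : F.card ≤ 36 := by
  have hp : ∀ v ∈ F, ∀ u ∈ F, v ≠ u → pairZ B v u = 0 ∨ pairZ B v u = -9 := by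
    intro v hv u hu hne
    have e1 := hF v hv
    have e2 := hF u hu
    obtain ⟨w, m, n, n', h⟩ := core3 hB (a := 9) (b := 9) (hc v hv u hu) hne (by omega) (by omega)
    have hm : m = 2 ∨ m = 3 := by omega
    omega
  have hnb : ∀ v ∈ F, (F.filter (fun u => pairZ B v u = -9)).card ≤ 2 := by
    intro v hv
    by_contra h'
    obtain ⟨x, y, z, hx, hy, hz, h1, h2, h3⟩ := Finset.two_lt_card_iff.1
      (by omega : 2 < (F.filter (fun u => pairZ B v u = -9)).card)
    obtain ⟨hx, hx'⟩ := Finset.mem_filter.1 hx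
    obtain ⟨hy, hy'⟩ := Finset.mem_filter.1 hy
    obtain ⟨hz, hz'⟩ := Finset.mem_filter.1 hz
    have hv' := hF v hv
    have key : ∀ p ∈ F, ∀ q ∈ F, p ≠ q → pairZ B v p = -9 → pairZ B v q = -9 →
        pairZ B p q = -9 := by
      intro p hp' q hq' hne e1 e2
      obtain ⟨a, ha, e⟩ := triple3 hB (hc p hp' v hv) (hc q hq' v hv)
      have e3 := hF p hp'
      have e4 := hF q hq'
      rcases hp p hp' q hq' hne with h | h
      · exfalso; omega
      · exact h
    have k1 := key x hx y hy h1 hx' hy'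
    have k2 := key x hx z hz h2 hx' hz'
    have k3 := key y hy z hz h3 hy' hz'
    have hnn := pz_nonneg hB (v + x + y + z)
    simp only [pz_add_left, pz_add_right] at hnn
    have s1 := pz_symm hB x v
    have s2 := pz_symm hB y v
    have s3 := pz_symm hB z v
    have s4 := pz_symm hB y x
    have s5 := pz_symm hB z x
    have s6 := pz_symm hB z y
    have e1 := hF x hx
    have e2 := hF y hy
    have e3 := hF z hz
    omega
  have h1 := card_welch_bound hB F 18 486 hF (by
    intro v hv
    have h0 : ∀ u ∈ F, pairZ B v u ^ 2 ≤
        (if v = u then 324 else 0) + (if pairZ B v u = -9 then 81 else 0) := by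
      intro u hu
      by_cases e : v = u
      · subst e
        rw [if_pos rfl, hF v hv]; norm_num
      · rcases hp v hv u hu e with h | h
        · rw [h]; split_ifs <;> norm_num
        · rw [h, if_neg e, if_pos rfl]; norm_num
    refine (Finset.sum_le_sum h0).trans ?_
    rw [Finset.sum_add_distrib, Finset.sum_ite_eq, if_pos hv, ← Finset.sum_filter,
      Finset.sum_const, nsmul_eq_mul]
    have := hnb v hv
    have : ((F.filter (fun u => pairZ B v u = -9)).card : ℤ) ≤ 2 := by exact_mod_cast this
    linarith)
  by_contra h
  have : (37 : ℤ) ≤ F.card := by exact_mod_cast (by omega : 37 ≤ F.card)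
  nlinarith

theorem index3 (hB : IsLeech B) {O2 O3 O4 O5 O6a O6b O7 O8b O9b : Set LV}
    (h2 : OrbitData B O2 2 (3 * 65520)) (h3 : OrbitData B O3 3 (256 * 65520))
    (h4 : OrbitData B O4 4 (6075 * 65520)) (h5 : OrbitData B O5 5 (70656 * 65520))
    (h6a : OrbitData B O6a 6 (518400 * 65520)) (h6b : OrbitData B O6b 6 (6900 * 65520))
    (h7 : OrbitData B O7 7 (2861568 * 65520)) (h8b : OrbitData B O8b 8 (12295800 * 65520))
    (h9b : OrbitData B O9b 9 (32972800 * 65520)) :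
    sRank B 3 = 10 ∧
      minimalSet B 3 = {(0 : LV)} ∪ O2 ∪ O3 ∪ O4 ∪ O5 ∪ O6a ∪ O6b ∪ O7 ∪ O8b ∪ O9b ∧
      (∀ R : Finset LV, IsRepSystem B 3 R →
        ∑ v ∈ R, Int.ceil ((pairZ B v v : ℚ) / (2 * 3)) = 19) := by
  have hi2 := (index2 hB h2 h3 h4).2.1
  have h0 := OD_zero (B := B)
  have f2 : O2.Finite := Nat.finite_of_card_ne_zero (by rw [h2.2.2]; norm_num)
  have f3 : O3.Finite := Nat.finite_of_card_ne_zero (by rw [h3.2.2]; norm_num)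
  have hT2 : ∀ v, v ∈ f2.toFinset ↔ pairZ B v v = 4 := by
    intro v
    rw [f2.mem_toFinset]
    refine ⟨fun hv => h2.2.1 v hv, fun hv => ?_⟩
    have h := min2 hB (v := v) (by omega)
    rw [hi2] at h
    rcases h with ((h | h) | h) | h
    · have := h0.2.1 v h; omega
    · exact h
    · have := h3.2.1 v h; omega
    · have := h4.2.1 v h; omega
  have hT3 : ∀ v, v ∈ f3.toFinset ↔ pairZ B v v = 6 := by
    intro v
    rw [f3.mem_toFinset]
    refine ⟨fun hv => h3.2.1 v hv, fun hv => ?_⟩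
    have h := min2 hB (v := v) (by omega)
    rw [hi2] at h
    rcases h with ((h | h) | h) | h
    · have := h0.2.1 v h; omega
    · have := h2.2.1 v h; omega
    · exact h
    · have := h4.2.1 v h; omega
  have c2 : f2.toFinset.card = 3 * 65520 := by
    rw [← h2.2.2, Nat.card_coe_set_eq, Set.ncard_eq_toFinset_card _ f2]
  have c3 : f3.toFinset.card = 256 * 65520 := by
    rw [← h3.2.2, Nat.card_coe_set_eq, Set.ncard_eq_toFinset_card _ f3]
  have a6 := avoid6 hB _ hT2 c2 h6a.1 h6a.2.2
  have a8 := avoid8 hB _ hT2 c2 h8b.1 h8b.2.2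
  have a9 := avoid9 hB _ _ hT2 hT3 c2 c3 h9b.1 h9b.2.2
  have hab : ∀ u ∈ O6a, ∀ v ∈ O6b, ¬ cong 3 u v := by
    intro u hu v hv h
    have e := a6 u hu v (h6a.2.1 u hu) h (h6b.2.1 v hv)
    subst e
    have e2 : O6a = O6b := IsOrb.eq_of_mem h6a.1 h6b.1 hu hv
    have e3 := h6a.2.2
    rw [e2, h6b.2.2] at e3
    norm_num at e3
  have hq : ∀ i, ∀ v ∈ (![{0}, O2, O3, O4, O5, O6a, O6b, O7, O8b, O9b] : Fin 10 → Set LV) i,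
      pairZ B v v = (![0, 4, 6, 8, 10, 12, 12, 14, 16, 18] : Fin 10 → ℤ) i := by
    intro i
    fin_cases i
    · exact h0.2.1
    · exact h2.2.1
    · exact h3.2.1
    · exact h4.2.1
    · exact h5.2.1
    · exact h6a.2.1
    · exact h6b.2.1
    · exact h7.2.1
    · exact h8b.2.1
    · exact h9b.2.1
  have hmin : ∀ i, (![{0}, O2, O3, O4, O5, O6a, O6b, O7, O8b, O9b] : Fin 10 → Set LV) i ⊆
      minimalSet B 3 := by
    have hsm : ∀ i, (![0, 4, 6, 8, 10, 12, 12, 14, 16, 18] : Fin 10 → ℤ) i ≤ 14 →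
        (![{0}, O2, O3, O4, O5, O6a, O6b, O7, O8b, O9b] : Fin 10 → Set LV) i ⊆
        minimalSet B 3 := fun i hi v hv => min3 hB (by rw [hq i v hv]; exact hi)
    intro i
    by_cases hi : (![0, 4, 6, 8, 10, 12, 12, 14, 16, 18] : Fin 10 → ℤ) i ≤ 14
    · exact hsm i hi
    · have : i = 8 ∨ i = 9 := by revert i; decide
      rcases this with rfl | rfl
      · exact fun v hv => a8 v hv (h8b.2.1 v hv)
      · exact fun v hv => a9 v hv (h9b.2.1 v hv)
  have hxi : ∀ i j, (![0, 4, 6, 8, 10, 12, 12, 14, 16, 18] : Fin 10 → ℤ) i =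
      (![0, 4, 6, 8, 10, 12, 12, 14, 16, 18] : Fin 10 → ℤ) j →
      i = j ∨ (i = 5 ∧ j = 6) ∨ (i = 6 ∧ j = 5) := by
    decide
  have main := framework (B := B) 3 ![{0}, O2, O3, O4, O5, O6a, O6b, O7, O8b, O9b]
    ![0, 4, 6, 8, 10, 12, 12, 14, 16, 18] ![1, 1, 1, 1, 1, 1, 3, 2, 9, 36]
    ![1, 3 * 65520, 256 * 65520, 6075 * 65520, 70656 * 65520, 518400 * 65520, 2300 * 65520,
      1430784 * 65520, 1366200 * 65520, 32972800 * 1820]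
    (by decide) (by intro i; fin_cases i <;> norm_num)
    (by
      intro i
      fin_cases i
      · exact h0.1
      · exact h2.1
      · exact h3.1
      · exact h4.1
      · exact h5.1
      · exact h6a.1
      · exact h6b.1
      · exact h7.1
      · exact h8b.1
      · exact h9b.1) hq
    (by
      intro i
      fin_cases i
      · exact h0.2.2.trans (by norm_num)
      · exact h2.2.2.trans (by norm_num)
      · exact h3.2.2.trans (by norm_num)
      · exact h4.2.2.trans (by norm_num)
      · exact h5.2.2.trans (by norm_num)
      · exact h6a.2.2.trans (by norm_num)
      · exact h6b.2.2.trans (by norm_num)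
      · exact h7.2.2.trans (by norm_num)
      · exact h8b.2.2.trans (by norm_num)
      · exact h9b.2.2.trans (by norm_num)) hmin
    (by
      intro i j u v hu hv h
      have e := hxi i j (by
        rw [← hq i u hu, ← hq j v hv]
        exact min_eq (hmin i hu) (hmin j hv) h)
      rcases e with e | ⟨rfl, rfl⟩ | ⟨rfl, rfl⟩
      · exact e
      · exact absurd h (hab u hu v hv)
      · exact absurd h.symm (hab v hv u hu))
    (by
      intro i F hF hc
      have hsm : (![0, 4, 6, 8, 10, 12, 12, 14, 16, 18] : Fin 10 → ℤ) i < 12 → F.card ≤ 1 :=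
        fun hlt => bound3_small hB F _ hlt (fun v hv => (hF v hv).2.1) hc
      fin_cases i
      · exact hsm (by decide)
      · exact hsm (by decide)
      · exact hsm (by decide)
      · exact hsm (by decide)
      · exact hsm (by decide)
      · refine Finset.card_le_one.2 ?_
        intro v hv y hy
        obtain ⟨_, e1, u, hu, huc⟩ := hF v hv
        obtain ⟨_, e2, _⟩ := hF y hy
        have e3 := a6 u hu v (h6a.2.1 u hu) huc.symm e1
        have e4 := a6 u hu y (h6a.2.1 u hu) (huc.symm.trans (hc v hv y hy)) e2
        rw [← e3, ← e4]
      · exact bound3_6 hB F (fun v hv => (hF v hv).2.1) hc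
      · exact bound3_7 hB F (fun v hv => (hF v hv).2.1) hc
      · exact bound3_8 hB F (fun v hv => (hF v hv).1) (fun v hv => (hF v hv).2.1) hc
      · exact bound3_9 hB F (fun v hv => (hF v hv).2.1) hc)
    (by simp [Fin.sum_univ_succ])
  obtain ⟨m1, m2, m3⟩ := main
  refine ⟨by simpa using m1, ?_, ?_⟩
  · rw [m2]
    ext v
    simp [Fin.exists_fin_succ, or_assoc]
  · intro R hR
    have := m3 R hR (fun y => Int.ceil ((y : ℚ) / (2 * 3)))
    rw [this]
    have hce : ∀ i, Int.ceil (((![0, 4, 6, 8, 10, 12, 12, 14, 16, 18] : Fin 10 → ℤ) i : ℚ) /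
        (2 * 3)) = (![0, 1, 1, 2, 2, 2, 2, 3, 3, 3] : Fin 10 → ℤ) i := by
      intro i
      rw [Int.ceil_eq_iff]
      fin_cases i <;> norm_num
    exact (Finset.sum_congr rfl fun i _ => hce i).trans (by decide)

end LeechAux

/-- Theorem (Sun–Wang): (1) The rank of `J^{w,Co₀}_{*,Λ,2}` over `ℂ[E₄,E₆]` is `s(2) = 4`;
the basic Conway orbits of index 2 are `O₀, O₂, O₃, O₄`; and `δ₂ = 5`.
(2) The rank of `J^{w,Co₀}_{*,Λ,3}` over `ℂ[E₄,E₆]` is `s(3) = 10`; the basic Conway orbits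
of index 3 are `O₀, O₂, O₃, O₄, O₅, O_{6a}, O_{6b}, O₇, O_{8b}, O_{9b}`; and `δ₃ = 19`. -/
theorem basic_orbits_index_two_and_three
    (B : Matrix (Fin 24) (Fin 24) ℤ) (hB : IsLeech B)
    (O2 O3 O4 O5 O6a O6b O7 O8b O9b : Set LV)
    (h2 : OrbitData B O2 2 (3 * 65520)) (h3 : OrbitData B O3 3 (256 * 65520))
    (h4 : OrbitData B O4 4 (6075 * 65520)) (h5 : OrbitData B O5 5 (70656 * 65520))
    (h6a : OrbitData B O6a 6 (518400 * 65520)) (h6b : OrbitData B O6b 6 (6900 * 65520))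
    (h7 : OrbitData B O7 7 (2861568 * 65520)) (h8b : OrbitData B O8b 8 (12295800 * 65520))
    (h9b : OrbitData B O9b 9 (32972800 * 65520)) :
    (sRank B 2 = 4 ∧ minimalSet B 2 = {(0 : LV)} ∪ O2 ∪ O3 ∪ O4 ∧
      (∀ R : Finset LV, IsRepSystem B 2 R →
        ∑ v ∈ R, Int.ceil ((pairZ B v v : ℚ) / (2 * 2)) = 5)) ∧
    (sRank B 3 = 10 ∧
      minimalSet B 3 = {(0 : LV)} ∪ O2 ∪ O3 ∪ O4 ∪ O5 ∪ O6a ∪ O6b ∪ O7 ∪ O8b ∪ O9b ∧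
      (∀ R : Finset LV, IsRepSystem B 3 R →
        ∑ v ∈ R, Int.ceil ((pairZ B v v : ℚ) / (2 * 3)) = 19)) := by
  exact ⟨index2 hB h2 h3 h4, index3 hB h2 h3 h4 h5 h6a h6b h7 h8b h9b⟩

end
end

section
/- For every w ∈ Λ, the number of ordered pairs (a,b) ∈ O₂ × O₂ with a + b = w equals 196560 if w = 0; 4600 if w ∈ O₂; 552 if w ∈ O₃; 46 if w ∈ O₄; 2 if w ∈ O₅; 2 if w ∈ O_{6b}; 1 if w ∈ O_{8a}; and 0 otherwise. Likewise, the number of ordered pairs (a,b) ∈ O₂ × O₃ with a + b = w equals 47104 if w ∈ O₂; 11178 if w ∈ O₃; 2048 if w ∈ O₄; 275 if w ∈ O₅; 24 if w ∈ O_{6a}; 1 if w ∈ O₇; 1 if w ∈ O_{8c}; and 0 otherwise. -/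
open Complex Matrix UpperHalfPlane
open scoped Manifold MatrixGroups Real Topology BigOperators

noncomputable section

namespace LeechAux

variable {B : Matrix (Fin 24) (Fin 24) ℤ}

lemma ip_add_left (u v w : LV) : pairZ B (u + v) w = pairZ B u w + pairZ B v w := by
  simp [pairZ, add_dotProduct]
lemma ip_add_right (u v w : LV) : pairZ B u (v + w) = pairZ B u v + pairZ B u w := by
  simp [pairZ, Matrix.mulVec_add, dotProduct_add]
lemma ip_neg_left (u w : LV) : pairZ B (-u) w = - pairZ B u w := by
  simp [pairZ]
lemma ip_neg_right (u w : LV) : pairZ B u (-w) = - pairZ B u w := by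
  simp [pairZ, Matrix.mulVec_neg]
lemma ip_sub_left (u v w : LV) : pairZ B (u - v) w = pairZ B u w - pairZ B v w := by
  simp [pairZ, sub_dotProduct]
lemma ip_sub_right (u v w : LV) : pairZ B u (v - w) = pairZ B u v - pairZ B u w := by
  simp [pairZ, Matrix.mulVec_sub, dotProduct_sub]
lemma ip_smul_left (c : ℤ) (u w : LV) : pairZ B (c • u) w = c * pairZ B u w := by
  unfold pairZ; rw [smul_dotProduct, smul_eq_mul]
lemma ip_smul_right (c : ℤ) (u w : LV) : pairZ B u (c • w) = c * pairZ B u w := by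
  unfold pairZ; rw [Matrix.mulVec_smul, dotProduct_smul, smul_eq_mul]
lemma ip_zero_left (w : LV) : pairZ B 0 w = 0 := by simp [pairZ]
lemma ip_zero_right (w : LV) : pairZ B w 0 = 0 := by simp [pairZ]

lemma ip_comm (hB : IsLeech B) (u v : LV) : pairZ B u v = pairZ B v u := by
  unfold pairZ
  rw [Matrix.dotProduct_mulVec, ← Matrix.mulVec_transpose, hB.1.eq, dotProduct_comm]

lemma ip_nonneg (hB : IsLeech B) (u : LV) : 0 ≤ pairZ B u u := by
  by_cases h : u = 0
  · rw [h, ip_zero_left]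
  · exact (hB.2.2.1 u h).le

lemma ip_self_eq_zero (hB : IsLeech B) (u : LV) (h : pairZ B u u = 0) : u = 0 := by
  by_contra h'
  have := hB.2.2.1 u h'
  omega

lemma ip_even (hB : IsLeech B) (u : LV) : pairZ B u u % 2 = 0 := by
  have := hB.2.2.2.1 u
  exact Int.even_iff.mp this

lemma ip_ge (hB : IsLeech B) (u : LV) (h : u ≠ 0) : 4 ≤ pairZ B u u := by
  have h1 := hB.2.2.1 u h
  have h2 := ip_even hB u
  have h3 := hB.2.2.2.2 u
  omega

lemma n_add (hB : IsLeech B) (u v : LV) :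
    pairZ B (u + v) (u + v) = pairZ B u u + pairZ B v v + 2 * pairZ B u v := by
  rw [ip_add_left, ip_add_right, ip_add_right, ip_comm hB v u]; ring
lemma n_sub (hB : IsLeech B) (u v : LV) :
    pairZ B (u - v) (u - v) = pairZ B u u + pairZ B v v - 2 * pairZ B u v := by
  rw [ip_sub_left, ip_sub_right, ip_sub_right, ip_comm hB v u]; ring
lemma n_neg (u : LV) : pairZ B (-u) (-u) = pairZ B u u := by
  rw [ip_neg_left, ip_neg_right]; ring
lemma n_two (u : LV) : pairZ B ((2 : ℤ) • u) ((2 : ℤ) • u) = 4 * pairZ B u u := by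
  rw [ip_smul_left, ip_smul_right]; ring

lemma cs (hB : IsLeech B) (u v : LV) :
    (pairZ B u v) ^ 2 ≤ pairZ B u u * pairZ B v v := by
  by_cases h : v = 0
  · subst h; simp [ip_zero_right]
  have hv := hB.2.2.1 v h
  have h1 := ip_nonneg hB ((pairZ B v v) • u - (pairZ B u v) • v)
  rw [n_sub hB, ip_smul_left, ip_smul_right, ip_smul_left, ip_smul_right, ip_smul_left,
    ip_smul_right] at h1
  have h2 : 0 ≤ pairZ B v v * (pairZ B u u * pairZ B v v - (pairZ B u v) ^ 2) := by
    nlinarith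
  have := nonneg_of_mul_nonneg_right h2 hv
  linarith

lemma S_finite (hB : IsLeech B) (k : ℤ) : {v : LV | pairZ B v v = 2 * k}.Finite := by
  have hinj : Function.Injective (fun v : LV => B.mulVec v) := by
    apply Matrix.mulVec_injective_of_isUnit
    rw [Matrix.isUnit_iff_isUnit_det, hB.2.1]; exact isUnit_one
  refine Set.Finite.of_finite_image (f := fun v : LV => B.mulVec v) ?_ hinj.injOn
  let e : Fin 24 → LV := fun i => Pi.single i 1
  let R : Fin 24 → ℤ := fun i => pairZ B (e i) (e i) * (2 * k)
  refine Set.Finite.subset (Set.finite_Icc (fun i => - R i) (fun i => R i)) ?_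
  rintro _ ⟨v, hv, rfl⟩
  have key : ∀ i, |B.mulVec v i| ≤ R i := by
    intro i
    have h1 : B.mulVec v i = pairZ B (e i) v := by simp [pairZ, e]
    have h2 := cs hB (e i) v
    rw [hv] at h2
    rw [h1]
    have h3 : |pairZ B (e i) v| ≤ (pairZ B (e i) v) ^ 2 := by
      rw [← sq_abs]
      have h0 := abs_nonneg (pairZ B (e i) v)
      nlinarith
    exact h3.trans h2
  exact ⟨fun i => (abs_le.mp (key i)).1, fun i => (abs_le.mp (key i)).2⟩

/-- The vectors of type `k`. -/
def F (hB : IsLeech B) (k : ℤ) : Finset LV := (S_finite hB k).toFinset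

lemma mem_F (hB : IsLeech B) (k : ℤ) (v : LV) : v ∈ F hB k ↔ pairZ B v v = 2 * k := by
  simp [F]

lemma neg_mem_F (hB : IsLeech B) (k : ℤ) (v : LV) (h : v ∈ F hB k) : -v ∈ F hB k := by
  rw [mem_F] at *; rw [n_neg, h]

/-- group facts -/
lemma act_ip {σ : Matrix (Fin 24) (Fin 24) ℤ} (hσ : σ ∈ ConwayGroup B) (u v : LV) :
    pairZ B (σ.mulVec u) (σ.mulVec v) = pairZ B u v := by
  have h := hσ.2
  unfold pairZ
  conv_rhs => rw [← h]
  rw [← Matrix.mulVec_mulVec, ← Matrix.mulVec_mulVec, Matrix.dotProduct_mulVec u,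
    Matrix.vecMul_transpose]

lemma inv_mem {σ : Matrix (Fin 24) (Fin 24) ℤ} (hσ : σ ∈ ConwayGroup B) :
    σ⁻¹ ∈ ConwayGroup B := by
  obtain ⟨h1, h2⟩ := hσ
  refine ⟨?_, ?_⟩
  · exact Matrix.isUnit_nonsing_inv_det σ h1
  · have h3 : σ * σ⁻¹ = 1 := Matrix.mul_nonsing_inv σ h1
    have h4 : (σ⁻¹)ᵀ * σᵀ = 1 := by rw [← Matrix.transpose_mul, h3, Matrix.transpose_one]
    calc (σ⁻¹)ᵀ * B * σ⁻¹ = (σ⁻¹)ᵀ * (σᵀ * B * σ) * σ⁻¹ := by rw [h2]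
      _ = ((σ⁻¹)ᵀ * σᵀ) * B * (σ * σ⁻¹) := by simp only [Matrix.mul_assoc]
      _ = B := by rw [h3, h4]; simp

lemma mul_mem' {σ τ : Matrix (Fin 24) (Fin 24) ℤ} (hσ : σ ∈ ConwayGroup B)
    (hτ : τ ∈ ConwayGroup B) : σ * τ ∈ ConwayGroup B := by
  refine ⟨?_, ?_⟩
  · rw [Matrix.det_mul]; exact hσ.1.mul hτ.1
  · calc (σ * τ)ᵀ * B * (σ * τ) = τᵀ * (σᵀ * B * σ) * τ := by
          rw [Matrix.transpose_mul]; simp only [Matrix.mul_assoc]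
      _ = B := by rw [hσ.2, hτ.2]

lemma neg_one_mem : (-1 : Matrix (Fin 24) (Fin 24) ℤ) ∈ ConwayGroup B := by
  refine ⟨?_, ?_⟩
  · simp [Matrix.det_neg]
  · simp

lemma act_inv {σ : Matrix (Fin 24) (Fin 24) ℤ} (hσ : σ ∈ ConwayGroup B) (u : LV) :
    σ⁻¹.mulVec (σ.mulVec u) = u := by
  rw [Matrix.mulVec_mulVec, Matrix.nonsing_inv_mul σ hσ.1, Matrix.one_mulVec]

lemma act_inj {σ : Matrix (Fin 24) (Fin 24) ℤ} (hσ : σ ∈ ConwayGroup B) :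
    Function.Injective (fun u : LV => σ.mulVec u) := by
  intro u v h
  have := congrArg (fun x => σ⁻¹.mulVec x) h
  simpa [act_inv hσ] using this

/-- Orbit facts. -/
lemma orbit_trans {O : Set LV} (hO : ∃ v, O = orbitOf B v) {u v : LV} (hu : u ∈ O) (hv : v ∈ O) :
    ∃ σ ∈ ConwayGroup B, v = σ.mulVec u := by
  obtain ⟨x, rfl⟩ := hO
  obtain ⟨σ, hσ, rfl⟩ := hu
  obtain ⟨τ, hτ, rfl⟩ := hv
  exact ⟨τ * σ⁻¹, mul_mem' hτ (inv_mem hσ), by rw [← Matrix.mulVec_mulVec, act_inv hσ]⟩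

lemma orbit_closed {O : Set LV} (hO : ∃ v, O = orbitOf B v) {u : LV} (hu : u ∈ O)
    {σ : Matrix (Fin 24) (Fin 24) ℤ} (hσ : σ ∈ ConwayGroup B) : σ.mulVec u ∈ O := by
  obtain ⟨x, rfl⟩ := hO
  obtain ⟨τ, hτ, rfl⟩ := hu
  exact ⟨σ * τ, mul_mem' hσ hτ, by rw [Matrix.mulVec_mulVec]⟩

lemma orbit_neg {O : Set LV} (hO : ∃ v, O = orbitOf B v) {u : LV} (hu : u ∈ O) : -u ∈ O := by
  have := orbit_closed hO hu neg_one_mem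
  simpa [Matrix.neg_mulVec] using this

/-- An orbit has a finset. -/
lemma orbit_finset (hB : IsLeech B) {O : Set LV} {x c : ℕ} (h : OrbitData B O x c) :
    ∃ T : Finset LV, (T : Set LV) = O ∧ T.card = c ∧ T ⊆ F hB x := by
  have hf : O.Finite := (S_finite hB x).subset (fun v hv => h.2.1 v hv)
  refine ⟨hf.toFinset, by simp, ?_, ?_⟩
  · rw [← h.2.2, Nat.card_coe_set_eq, Set.ncard_eq_toFinset_card _ hf]
  · intro v hv
    rw [mem_F]; exact h.2.1 v (by simpa using hv)

end LeechAux

namespace LeechAux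

variable {B : Matrix (Fin 24) (Fin 24) ℤ}

/-- Reduction modulo 2. -/
def red (v : LV) : Fin 24 → ZMod 2 := fun i => (v i : ZMod 2)

lemma red_eq_iff (u v : LV) : red u = red v ↔ ∃ a : LV, u = v + (2 : ℤ) • a := by
  constructor
  · intro h
    have h1 : ∀ i, ∃ c : ℤ, u i = v i + 2 * c := by
      intro i
      have h2 : ((u i : ℤ) : ZMod 2) = (v i : ZMod 2) := congrFun h i
      have h3 := (ZMod.intCast_eq_intCast_iff_dvd_sub (v i) (u i) 2).mp h2.symm
      obtain ⟨c, hc⟩ := h3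
      exact ⟨c, by push_cast at hc; linarith⟩
    choose a ha using h1
    refine ⟨a, ?_⟩
    funext i
    rw [ha i]; simp
  · rintro ⟨a, rfl⟩
    funext i
    have : (2 : ZMod 2) = 0 := by decide
    simp [red, this]

lemma red_neg (u : LV) : red (-u) = red u := by
  rw [red_eq_iff]; exact ⟨-u, by funext i; simp; ring⟩

lemma red_act {σ : Matrix (Fin 24) (Fin 24) ℤ} {u v : LV} (h : red u = red v) :
    red (σ.mulVec u) = red (σ.mulVec v) := by
  rw [red_eq_iff] at *
  obtain ⟨a, rfl⟩ := h
  exact ⟨σ.mulVec a, by rw [Matrix.mulVec_add, Matrix.mulVec_smul]⟩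

lemma red_parity (hB : IsLeech B) {u v : LV} (h : red u = red v) :
    (pairZ B u u - pairZ B v v) % 4 = 0 := by
  rw [red_eq_iff] at h
  obtain ⟨a, rfl⟩ := h
  rw [n_add hB, n_two, ip_smul_right]
  omega

/-- The two half vectors. -/
lemma halves (hB : IsLeech B) {u v : LV} (h : red u = red v) :
    ∃ a b : LV, u = a + b ∧ v = a - b ∧ 4 * pairZ B a a = pairZ B u u + pairZ B v v + 2 * pairZ B u v ∧
      4 * pairZ B b b = pairZ B u u + pairZ B v v - 2 * pairZ B u v := by
  rw [red_eq_iff] at h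
  obtain ⟨b, rfl⟩ := h
  refine ⟨v + b, b, ?_, ?_, ?_, ?_⟩
  · rw [two_smul]; abel
  · abel
  · rw [n_add hB, n_add hB, n_two, ip_add_left, ip_smul_left, ip_smul_right, ip_comm hB b v]; ring
  · rw [n_add hB, n_two, ip_add_left, ip_smul_left, ip_smul_right, ip_comm hB b v]; ring

lemma short_eq (hB : IsLeech B) {u v : LV} (h : red u = red v)
    (hn : pairZ B u u + pairZ B v v < 16) : u = v ∨ u = -v := by
  obtain ⟨a, b, h1, h2, h3, h4⟩ := halves hB h
  by_cases ha : a = 0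
  · right; rw [h1, h2, ha]; simp
  by_cases hb : b = 0
  · left; rw [h1, h2, hb]; simp
  have := ip_ge hB a ha
  have := ip_ge hB b hb
  omega

lemma short_eq4 (hB : IsLeech B) {u v : LV} (h : red u = red v)
    (hu : pairZ B u u = 8) (hv : pairZ B v v = 8) : u = v ∨ u = -v ∨ pairZ B u v = 0 := by
  obtain ⟨a, b, h1, h2, h3, h4⟩ := halves hB h
  by_cases ha : a = 0
  · right; left; rw [h1, h2, ha]; simp
  by_cases hb : b = 0
  · left; rw [h1, h2, hb]; simp
  have := ip_ge hB a ha
  have := ip_ge hB b hb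
  right; right; omega

lemma ip_sum_left {ι : Type*} (s : Finset ι) (f : ι → LV) (w : LV) :
    pairZ B (∑ i ∈ s, f i) w = ∑ i ∈ s, pairZ B (f i) w := by
  classical
  induction s using Finset.induction_on with
  | empty => simp [ip_zero_left]
  | insert a s ha ih => rw [Finset.sum_insert ha, Finset.sum_insert ha, ip_add_left, ih]

lemma orth_card (T : Finset LV) (h8 : ∀ v ∈ T, pairZ B v v = 8)
    (ho : ∀ u ∈ T, ∀ v ∈ T, u ≠ v → pairZ B u v = 0) : T.card ≤ 24 := by
  have hl : LinearIndependent ℤ (fun x : T => (x : LV)) := by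
    rw [linearIndependent_iff']
    intro s g hg i hi
    have h1 : pairZ B (∑ j ∈ s, g j • (j : LV)) (i : LV) = 0 := by rw [hg, ip_zero_left]
    rw [ip_sum_left, Finset.sum_eq_single i] at h1
    · rw [ip_smul_left, h8 _ i.2] at h1
      omega
    · intro j _ hj
      rw [ip_smul_left, ho _ j.2 _ i.2 (fun h => hj (Subtype.ext h)), mul_zero]
    · intro h; exact absurd hi h
  have := hl.fintype_card_le_finrank
  simpa using this

lemma frame_card (hB : IsLeech B) (T : Finset LV) (h8 : ∀ v ∈ T, pairZ B v v = 8)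
    (hr : ∀ u ∈ T, ∀ v ∈ T, red u = red v) : T.card ≤ 48 := by
  classical
  have hne : ∀ v ∈ T, v ≠ 0 := by
    rintro v hv rfl
    have := h8 _ hv
    rw [ip_zero_left] at this; omega
  have h1 : (T.filter (fun v => 0 < toLex v)).card ≤ 24 := by
    apply orth_card (B := B)
    · intro v hv; exact h8 v (Finset.mem_filter.mp hv).1
    · intro u hu v hv huv
      rw [Finset.mem_filter] at hu hv
      rcases short_eq4 hB (hr u hu.1 v hv.1) (h8 u hu.1) (h8 v hv.1) with h | h | h
      · exact absurd h huv
      · exfalso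
        have h3 := hu.2
        rw [h, toLex_neg, Left.neg_pos_iff] at h3
        exact lt_asymm h3 hv.2
      · exact h
  have h2 : (T.filter (fun v => ¬ 0 < toLex v)).card ≤ 24 := by
    apply orth_card (B := B)
    · intro v hv; exact h8 v (Finset.mem_filter.mp hv).1
    · intro u hu v hv huv
      rw [Finset.mem_filter] at hu hv
      have hlt : ∀ x ∈ T, ¬ 0 < toLex x → toLex x < 0 := by
        intro x hx hx'
        refine lt_of_le_of_ne (not_lt.mp hx') ?_
        intro h
        exact hne x hx (toLex.injective h)
      have hu' := hlt u hu.1 hu.2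
      have hv' := hlt v hv.1 hv.2
      rcases short_eq4 hB (hr u hu.1 v hv.1) (h8 u hu.1) (h8 v hv.1) with h | h | h
      · exact absurd h huv
      · exfalso
        rw [h, toLex_neg, Left.neg_neg_iff] at hu'
        exact lt_asymm hu' hv'
      · exact h
  have := Finset.card_filter_add_card_filter_not (s := T) (fun v => 0 < toLex v)
  omega

/-- The structural facts following from the sizes of the orbits of types 2, 3, 4. -/
structure Good (hB : IsLeech B) : Prop where
  c2 : (F hB 2).card = 196560
  c3 : (F hB 3).card = 256 * 65520
  c4 : (F hB 4).card = 6075 * 65520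
  t2 : ∀ u ∈ F hB 2, ∀ v ∈ F hB 2, ∃ σ ∈ ConwayGroup B, v = σ.mulVec u
  t3 : ∀ u ∈ F hB 3, ∀ v ∈ F hB 3, ∃ σ ∈ ConwayGroup B, v = σ.mulVec u
  t4 : ∀ u ∈ F hB 4, ∀ v ∈ F hB 4, ∃ σ ∈ ConwayGroup B, v = σ.mulVec u
  cover : ∀ w : LV, red w = red 0 ∨ (∃ u ∈ F hB 2, red w = red u) ∨
    (∃ u ∈ F hB 3, red w = red u) ∨ (∃ u ∈ F hB 4, red w = red u)
  x4 : ((F hB 4).image red).card = 8292375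
  fib : ∀ u ∈ F hB 4, ((F hB 4).filter (fun f => red f = red u)).card = 48

lemma fib_short (hB : IsLeech B) {k : ℤ} (hk : k < 4) (T : Finset LV) (hT : T ⊆ F hB k) :
    T.card ≤ 2 * (T.image red).card := by
  classical
  apply Finset.card_le_mul_card_image
  intro x hx
  obtain ⟨u, hu, rfl⟩ := Finset.mem_image.mp hx
  have : T.filter (fun v => red v = red u) ⊆ {u, -u} := by
    intro v hv
    rw [Finset.mem_filter] at hv
    have h1 := (mem_F hB k v).mp (hT hv.1)
    have h2 := (mem_F hB k u).mp (hT hu)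
    rcases short_eq hB hv.2 (by omega) with h | h <;> simp [h]
  exact (Finset.card_le_card this).trans Finset.card_le_two

lemma image_disj (hB : IsLeech B) {j k : ℤ} (hj : j < k) (hj0 : 0 ≤ j) (hk : k ≤ 4) (T U : Finset LV)
    (hT : T ⊆ F hB j) (hU : U ⊆ F hB k) : Disjoint (T.image red) (U.image red) := by
  classical
  rw [Finset.disjoint_left]
  intro x hx hy
  obtain ⟨u, hu, rfl⟩ := Finset.mem_image.mp hx
  obtain ⟨v, hv, hvu⟩ := Finset.mem_image.mp hy
  have h1 := (mem_F hB j u).mp (hT hu)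
  have h2 := (mem_F hB k v).mp (hU hv)
  rcases short_eq hB hvu (by omega) with h | h
  · rw [h] at h2; omega
  · rw [h, n_neg] at h2; omega

lemma good_of_orbits (hB : IsLeech B) {O2 O3 O4 : Set LV}
    (h2 : OrbitData B O2 2 (3 * 65520)) (h3 : OrbitData B O3 3 (256 * 65520))
    (h4 : OrbitData B O4 4 (6075 * 65520)) :
    Good hB ∧ O2 = F hB 2 ∧ O3 = F hB 3 ∧ O4 = F hB 4 := by
  classical
  obtain ⟨T2, e2, k2, s2⟩ := orbit_finset hB h2
  obtain ⟨T3, e3, k3, s3⟩ := orbit_finset hB h3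
  obtain ⟨T4, e4, k4, s4⟩ := orbit_finset hB h4
  have f2 := fib_short hB (by norm_num) T2 s2
  have f3 := fib_short hB (by norm_num) T3 s3
  have f4' : ∀ x ∈ T4.image red, (T4.filter (fun v => red v = x)).card ≤ 48 := by
    intro x hx
    apply frame_card hB
    · intro v hv
      have := (mem_F hB _ v).mp (s4 (Finset.mem_filter.mp hv).1)
      simpa using this
    · intro u hu v hv
      rw [(Finset.mem_filter.mp hu).2, (Finset.mem_filter.mp hv).2]
  have f4 := Finset.card_le_mul_card_image T4 48 f4'
  let Z : Finset LV := {0}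
  have sZ : Z ⊆ F hB 0 := by
    intro v hv
    rw [Finset.mem_singleton.mp hv, mem_F, ip_zero_left]; rfl
  have d02 := image_disj hB (by norm_num) (by norm_num) (by norm_num) Z T2 sZ s2
  have d03 := image_disj hB (by norm_num) (by norm_num) (by norm_num) Z T3 sZ s3
  have d04 := image_disj hB (by norm_num) (by norm_num) (by norm_num) Z T4 sZ s4
  have d23 := image_disj hB (by norm_num) (by norm_num) (by norm_num) T2 T3 s2 s3
  have d24 := image_disj hB (by norm_num) (by norm_num) (by norm_num) T2 T4 s2 s4
  have d34 := image_disj hB (by norm_num) (by norm_num) (by norm_num) T3 T4 s3 s4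
  have kZ : (Z.image red).card = 1 := by simp [Z]
  have hcard : (Z.image red ∪ T2.image red ∪ T3.image red ∪ T4.image red).card =
      1 + (T2.image red).card + (T3.image red).card + (T4.image red).card := by
    rw [Finset.card_union_of_disjoint, Finset.card_union_of_disjoint,
      Finset.card_union_of_disjoint, kZ]
    · exact d02
    · exact Finset.disjoint_union_left.mpr ⟨d03, d23⟩
    · exact Finset.disjoint_union_left.mpr ⟨Finset.disjoint_union_left.mpr ⟨d04, d24⟩, d34⟩
  have huniv : Fintype.card (Fin 24 → ZMod 2) = 16777216 := by
    rw [Fintype.card_fun, ZMod.card, Fintype.card_fin]; norm_num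
  have hle := Finset.card_le_univ (Z.image red ∪ T2.image red ∪ T3.image red ∪ T4.image red)
  rw [huniv, hcard] at hle
  have x4 : (T4.image red).card = 8292375 := by omega
  have hall : Z.image red ∪ T2.image red ∪ T3.image red ∪ T4.image red = Finset.univ := by
    apply Finset.eq_univ_of_card
    rw [hcard, huniv]; omega
  have cover : ∀ w : LV, red w = red 0 ∨ (∃ u ∈ T2, red w = red u) ∨
      (∃ u ∈ T3, red w = red u) ∨ (∃ u ∈ T4, red w = red u) := by
    intro w
    have := Finset.mem_univ (red w)
    rw [← hall] at this
    simp only [Finset.mem_union, Finset.mem_image] at this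
    rcases this with ((⟨u, hu, h⟩ | ⟨u, hu, h⟩) | ⟨u, hu, h⟩) | ⟨u, hu, h⟩
    · left; rw [← h, Finset.mem_singleton.mp hu]
    · right; left; exact ⟨u, hu, h.symm⟩
    · right; right; left; exact ⟨u, hu, h.symm⟩
    · right; right; right; exact ⟨u, hu, h.symm⟩
  have fib : ∀ x ∈ T4.image red, (T4.filter (fun f => red f = x)).card = 48 := by
    have hs : ∑ x ∈ T4.image red, (T4.filter (fun f => red f = x)).card =
        ∑ x ∈ T4.image red, 48 := by
      rw [← Finset.card_eq_sum_card_image, Finset.sum_const, x4, k4]; norm_num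
    exact (Finset.sum_eq_sum_iff_of_le f4').mp hs
  have n0 : ∀ {k : ℤ} {v : LV}, 0 < k → k ≤ 4 → v ∈ F hB k → red v ≠ red 0 := by
    intro k v hk hk4 hv h
    rw [mem_F] at hv
    rcases short_eq hB h (by rw [ip_zero_left]; omega) with h | h <;>
    · rw [h] at hv; simp [ip_zero_left] at hv; omega
  have clos : ∀ {O : Set LV} {T : Finset LV}, (∃ v, O = orbitOf B v) → (T : Set LV) = O →
      ∀ v ∈ T, -v ∈ T := by
    intro O T hO hT v hv
    have : -v ∈ O := orbit_neg hO (by rw [← hT]; exact hv)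
    rw [← hT] at this; exact this
  have E2 : T2 = F hB 2 := by
    refine Finset.Subset.antisymm s2 ?_
    intro v hv
    have hv' := (mem_F hB _ v).mp hv
    rcases cover v with h | ⟨u, hu, h⟩ | ⟨u, hu, h⟩ | ⟨u, hu, h⟩
    · exact absurd h (n0 (by norm_num) (by norm_num) hv)
    · have hu' := (mem_F hB _ u).mp (s2 hu)
      push_cast at hu'
      rcases short_eq hB h (by omega) with h | h
      · rw [h]; exact hu
      · rw [h]; exact clos h2.1 e2 u hu
    · have hu' := (mem_F hB _ u).mp (s3 hu)
      push_cast at hu'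
      have := red_parity hB h
      omega
    · have hu' := (mem_F hB _ u).mp (s4 hu)
      push_cast at hu'
      rcases short_eq hB h (by omega) with h | h
      · rw [h] at hv'; omega
      · rw [h, n_neg] at hv'; omega
  have E3 : T3 = F hB 3 := by
    refine Finset.Subset.antisymm s3 ?_
    intro v hv
    have hv' := (mem_F hB _ v).mp hv
    rcases cover v with h | ⟨u, hu, h⟩ | ⟨u, hu, h⟩ | ⟨u, hu, h⟩
    · exact absurd h (n0 (by norm_num) (by norm_num) hv)
    · have hu' := (mem_F hB _ u).mp (s2 hu)
      push_cast at hu'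
      have := red_parity hB h
      omega
    · have hu' := (mem_F hB _ u).mp (s3 hu)
      push_cast at hu'
      rcases short_eq hB h (by omega) with h | h
      · rw [h]; exact hu
      · rw [h]; exact clos h3.1 e3 u hu
    · have hu' := (mem_F hB _ u).mp (s4 hu)
      push_cast at hu'
      have := red_parity hB h
      omega
  have E4 : T4 = F hB 4 := by
    refine Finset.Subset.antisymm s4 ?_
    intro v hv
    have hv' := (mem_F hB _ v).mp hv
    rcases cover v with h | ⟨u, hu, h⟩ | ⟨u, hu, h⟩ | ⟨u, hu, h⟩
    · exact absurd h (n0 (by norm_num) (by norm_num) hv)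
    · have hu' := (mem_F hB _ u).mp (s2 hu)
      push_cast at hu'
      rcases short_eq hB h (by omega) with h | h
      · rw [h] at hv'; omega
      · rw [h, n_neg] at hv'; omega
    · have hu' := (mem_F hB _ u).mp (s3 hu)
      push_cast at hu'
      have := red_parity hB h
      omega
    · by_contra hvT
      have h48 := fib (red u) (Finset.mem_image_of_mem _ hu)
      have hle : (insert v (T4.filter (fun f => red f = red u))).card ≤ 48 := by
        apply frame_card hB
        · intro x hx
          rcases Finset.mem_insert.mp hx with rfl | hx
          · omega
          · have := (mem_F hB _ x).mp (s4 (Finset.mem_filter.mp hx).1)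
            simpa using this
        · have hh : ∀ x ∈ insert v (T4.filter (fun f => red f = red u)), red x = red u := by
            intro x hx
            rcases Finset.mem_insert.mp hx with rfl | hx
            · exact h
            · exact (Finset.mem_filter.mp hx).2
          intro x hx y hy
          rw [hh x hx, hh y hy]
      rw [Finset.card_insert_of_notMem, h48] at hle
      · omega
      · intro hx; exact hvT (Finset.mem_filter.mp hx).1
  have tr : ∀ {O : Set LV} {T : Finset LV}, (∃ v, O = orbitOf B v) → (T : Set LV) = O →
      ∀ u ∈ T, ∀ v ∈ T, ∃ σ ∈ ConwayGroup B, v = σ.mulVec u := by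
    intro O T hO hT u hu v hv
    exact orbit_trans hO (by rw [← hT]; exact hu) (by rw [← hT]; exact hv)
  refine ⟨⟨?_, ?_, ?_, ?_, ?_, ?_, ?_, ?_, ?_⟩, ?_, ?_, ?_⟩
  · rw [← E2, k2]
  · rw [← E3, k3]
  · rw [← E4, k4]
  · rw [← E2]; exact tr h2.1 e2
  · rw [← E3]; exact tr h3.1 e3
  · rw [← E4]; exact tr h4.1 e4
  · rw [← E2, ← E3, ← E4]; exact cover
  · rw [← E4]; exact x4
  · rw [← E4]; intro u hu; exact fib _ (Finset.mem_image_of_mem _ hu)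
  · rw [← E2, e2]
  · rw [← E3, e3]
  · rw [← E4, e4]

end LeechAux

namespace LeechAux

variable {B : Matrix (Fin 24) (Fin 24) ℤ}

/-- Minimal vectors with prescribed inner product with `w`. -/
def P (hB : IsLeech B) (k : ℤ) (w : LV) : Finset LV :=
  (F hB 2).filter (fun a => pairZ B a w = k)

/-- Their number. -/
def c (hB : IsLeech B) (k : ℤ) (w : LV) : ℕ := (P hB k w).card

lemma mem_P (hB : IsLeech B) (k : ℤ) (w a : LV) :
    a ∈ P hB k w ↔ pairZ B a a = 4 ∧ pairZ B a w = k := by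
  rw [P, Finset.mem_filter, mem_F]; norm_num

lemma c_act_le (hB : IsLeech B) (k : ℤ) (w : LV) {σ : Matrix (Fin 24) (Fin 24) ℤ}
    (hσ : σ ∈ ConwayGroup B) : c hB k w ≤ c hB k (σ.mulVec w) := by
  apply Finset.card_le_card_of_injOn (fun a => σ.mulVec a)
  · intro a ha
    have ha' := (mem_P hB k w a).mp ha
    exact (mem_P hB k _ _).mpr ⟨by rw [act_ip hσ, ha'.1], by rw [act_ip hσ, ha'.2]⟩
  · exact (act_inj hσ).injOn

lemma c_act (hB : IsLeech B) (k : ℤ) (w : LV) {σ : Matrix (Fin 24) (Fin 24) ℤ}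
    (hσ : σ ∈ ConwayGroup B) : c hB k (σ.mulVec w) = c hB k w := by
  apply le_antisymm
  · have := c_act_le hB k (σ.mulVec w) (inv_mem hσ)
    rwa [act_inv hσ] at this
  · exact c_act_le hB k w hσ

lemma c_neg (hB : IsLeech B) (k : ℤ) (w : LV) : c hB (-k) w = c hB k w := by
  refine Finset.card_nbij' (fun a => -a) (fun a => -a) ?_ ?_ ?_ ?_
  · intro a ha
    have ha' := (mem_P hB _ w a).mp ha
    exact (mem_P hB _ _ _).mpr ⟨by rw [n_neg, ha'.1], by rw [ip_neg_left, ha'.2, neg_neg]⟩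
  · intro a ha
    have ha' := (mem_P hB _ w a).mp ha
    exact (mem_P hB _ _ _).mpr ⟨by rw [n_neg, ha'.1], by rw [ip_neg_left, ha'.2]⟩
  · intro a _; simp
  · intro a _; simp

lemma Q_eq (hB : IsLeech B) (x k y : ℤ) (hy : y = x + 2 - k) :
    ∑ w ∈ F hB x, c hB k w = ∑ b ∈ F hB y, c hB (k - 4) b := by
  have h1 : ∀ x k : ℤ, ∑ w ∈ F hB x, c hB k w =
      ((F hB x).sigma (fun w => P hB k w)).card := by
    intro x k; rw [Finset.card_sigma]; rfl
  rw [h1, h1]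
  refine Finset.card_nbij' (fun p => ⟨p.1 - p.2, p.2⟩) (fun p => ⟨p.1 + p.2, p.2⟩) ?_ ?_ ?_ ?_
  · rintro ⟨w, a⟩ h
    simp only [Finset.coe_sigma, Set.mem_sigma_iff, Finset.mem_coe, mem_F, mem_P] at h ⊢
    obtain ⟨h1, h2, h3⟩ := h
    refine ⟨?_, h2, ?_⟩
    · rw [n_sub hB, h1, h2, ip_comm hB w a, h3, hy]; ring
    · rw [ip_sub_right, h3, h2]
  · rintro ⟨w, a⟩ h
    simp only [Finset.coe_sigma, Set.mem_sigma_iff, Finset.mem_coe, mem_F, mem_P] at h ⊢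
    obtain ⟨h1, h2, h3⟩ := h
    refine ⟨?_, h2, ?_⟩
    · rw [n_add hB, h1, h2, ip_comm hB w a, h3, hy]; ring
    · rw [ip_add_right, h3, h2]; ring
  · rintro ⟨w, a⟩ _; simp
  · rintro ⟨w, a⟩ _; simp

lemma red_sub_two (w a : LV) : red (w - (2 : ℤ) • a) = red w := by
  rw [red_eq_iff]; exact ⟨-a, by rw [smul_neg, sub_eq_add_neg]⟩

lemma n_sub_two (hB : IsLeech B) {k : ℤ} {w a : LV} (ha : a ∈ P hB k w) :
    pairZ B (w - (2 : ℤ) • a) (w - (2 : ℤ) • a) = pairZ B w w + 16 - 4 * k := by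
  rw [mem_P] at ha
  rw [n_sub hB, n_two, ip_smul_right, ip_comm hB w a, ha.1, ha.2]; ring

/-- Decompositions of `w` in the class of a short vector `u`. -/
lemma half_filter (hB : IsLeech B) {k : ℤ} {w u a b : LV} (hw : w = a + b) (hu : u = a - b)
    (hk : pairZ B u u = pairZ B w w + 16 - 4 * k) (hlt : pairZ B u u < 8) (x : LV) :
    x ∈ P hB k w ↔ (x = a ∨ x = b) ∧ pairZ B x x = 4 := by
  have hr : red w = red u := by
    rw [red_eq_iff]; exact ⟨b, by rw [hw, hu, two_smul]; abel⟩
  constructor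
  · intro hx
    refine ⟨?_, ((mem_P hB k w x).mp hx).1⟩
    have h1 := n_sub_two hB hx
    have h2 := (red_sub_two w x).trans hr
    rcases short_eq hB h2 (by omega) with h | h
    · right
      have : (2 : ℤ) • (x - b) = 0 := by
        rw [hw, hu] at h
        rw [smul_sub, two_smul, two_smul]
        rw [two_smul] at h
        have h' : a + b - (x + x) - (a - b) = 0 := by rw [h, sub_self]
        calc x + x - (b + b) = -(a + b - (x + x) - (a - b)) := by abel
          _ = 0 := by rw [h', neg_zero]
      exact sub_eq_zero.mp ((smul_eq_zero_iff_right (by norm_num)).mp this)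
    · left
      have : (2 : ℤ) • (x - a) = 0 := by
        rw [hw, hu] at h
        rw [smul_sub, two_smul, two_smul]
        rw [two_smul] at h
        have h' : a + b - (x + x) - -(a - b) = 0 := by rw [h, sub_self]
        calc x + x - (a + a) = -(a + b - (x + x) - -(a - b)) := by abel
          _ = 0 := by rw [h', neg_zero]
      exact sub_eq_zero.mp ((smul_eq_zero_iff_right (by norm_num)).mp this)
  · rintro ⟨h, h4⟩
    rw [mem_P]
    refine ⟨h4, ?_⟩
    rw [hw, hu, n_add hB, n_sub hB] at hk
    rcases h with rfl | rfl
    · rw [hw, ip_add_right, h4]; omega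
    · rw [hw, ip_add_right, h4, ip_comm hB x a]; omega

lemma count_two (hB : IsLeech B) {k : ℤ} {w u : LV} (hr : red w = red u) (hu0 : u ≠ 0)
    (hk : pairZ B u u = pairZ B w w + 16 - 4 * k) (hlt : pairZ B u u < 8)
    (hs : pairZ B w w + pairZ B u u = 16) (hne : pairZ B w w ≠ pairZ B u u) : c hB k w = 2 := by
  classical
  obtain ⟨a, b, hw, hu, h3, h4⟩ := halves hB hr
  have ha : a ≠ 0 := by
    rintro rfl; apply hne; rw [hw, hu]; simp [n_neg]
  have hb : b ≠ 0 := by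
    rintro rfl; apply hne; rw [hw, hu]; simp
  have h5 := ip_ge hB a ha
  have h6 := ip_ge hB b hb
  have hab : a ≠ b := by
    rintro rfl; exact hu0 (by rw [hu]; simp)
  have : P hB k w = {a, b} := by
    ext x
    rw [half_filter hB hw hu hk hlt, Finset.mem_insert, Finset.mem_singleton]
    constructor
    · exact fun h => h.1
    · intro h
      refine ⟨h, ?_⟩
      rcases h with rfl | rfl <;> omega
  rw [c, this, Finset.card_pair hab]

lemma count_one (hB : IsLeech B) {k : ℤ} {w u : LV} (hr : red w = red u)
    (hk : pairZ B u u = pairZ B w w + 16 - 4 * k) (hlt : pairZ B u u < 8)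
    (hs : pairZ B w w + pairZ B u u = 20) (hne : pairZ B w w ≠ pairZ B u u) : c hB k w = 1 := by
  classical
  obtain ⟨a, b, hw, hu, h3, h4⟩ := halves hB hr
  have ha : a ≠ 0 := by
    rintro rfl; apply hne; rw [hw, hu]; simp [n_neg]
  have hb : b ≠ 0 := by
    rintro rfl; apply hne; rw [hw, hu]; simp
  have h5 := ip_ge hB a ha
  have h6 := ip_ge hB b hb
  have h7 := ip_even hB a
  have h8 := ip_even hB b
  rw [c, Finset.card_eq_one]
  by_cases h : pairZ B a a = 4
  · refine ⟨a, ?_⟩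
    ext x
    rw [half_filter hB hw hu hk hlt, Finset.mem_singleton]
    constructor
    · rintro ⟨rfl | rfl, h'⟩
      · rfl
      · omega
    · rintro rfl; exact ⟨Or.inl rfl, h⟩
  · refine ⟨b, ?_⟩
    ext x
    rw [half_filter hB hw hu hk hlt, Finset.mem_singleton]
    constructor
    · rintro ⟨rfl | rfl, h'⟩
      · omega
      · rfl
    · rintro rfl; exact ⟨Or.inr rfl, by omega⟩

lemma sub_two_inj (w : LV) : Function.Injective (fun a : LV => w - (2 : ℤ) • a) := by
  intro a b h
  have h1 : (2 : ℤ) • a = (2 : ℤ) • b := sub_right_injective h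
  exact smul_right_injective _ (by norm_num : (2 : ℤ) ≠ 0) h1

variable {hB : IsLeech B}

lemma c4_F4 (G : Good hB) {w : LV} (hw : w ∈ F hB 4) : c hB 4 w = 46 := by
  classical
  have hfib := G.fib w hw
  set Fr := (F hB 4).filter (fun f => red f = red w) with hFr
  have hw8 := (mem_F hB 4 w).mp hw
  have hw0 : w ≠ -w := by
    intro h
    have h1 : pairZ B w (-w) = pairZ B w w := by rw [← h]
    rw [ip_neg_right] at h1; omega
  have himg : (P hB 4 w).image (fun a => w - (2 : ℤ) • a) = (Fr.erase w).erase (-w) := by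
    ext f
    rw [Finset.mem_image, Finset.mem_erase, Finset.mem_erase, hFr, Finset.mem_filter, mem_F]
    constructor
    · rintro ⟨a, ha, rfl⟩
      have h1 := n_sub_two hB ha
      rw [mem_P] at ha
      refine ⟨?_, ?_, by omega, red_sub_two w a⟩
      · intro h
        have h2 : pairZ B (w - (2 : ℤ) • a) w = pairZ B (-w) w := by rw [h]
        rw [ip_sub_left, ip_smul_left, ip_neg_left] at h2; omega
      · intro h
        have h2 : pairZ B (w - (2 : ℤ) • a) w = pairZ B w w := by rw [h]
        rw [ip_sub_left, ip_smul_left] at h2; omega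
    · rintro ⟨h1, h2, h3, h4⟩
      obtain ⟨a, b, ea, eb, n1, n2⟩ := halves hB h4.symm
      refine ⟨b, ?_, ?_⟩
      · rcases short_eq4 hB h4 (by omega) (by omega) with h | h | h
        · exact absurd h h2
        · exact absurd h h1
        · rw [ip_comm hB] at h
          rw [mem_P]
          have n3 : pairZ B b b = 4 := by omega
          refine ⟨n3, ?_⟩
          have n4 : pairZ B w w = 8 := by omega
          rw [ea, n_add hB] at n4
          rw [ea, ip_add_right, ip_comm hB b a]; omega
      · rw [ea, eb, two_smul]; abel
  have hc := Finset.card_image_of_injective (P hB 4 w) (sub_two_inj w)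
  rw [himg, Finset.card_erase_of_mem, Finset.card_erase_of_mem, hfib] at hc
  · rw [c, ← hc]
  · rw [hFr, Finset.mem_filter]; exact ⟨hw, rfl⟩
  · rw [Finset.mem_erase, hFr, Finset.mem_filter]
    exact ⟨hw0.symm, neg_mem_F hB 4 w hw, red_neg w⟩

lemma c5_F6 (G : Good hB) {w u : LV} (hw : w ∈ F hB 6) (hu : u ∈ F hB 4) (hr : red w = red u) :
    c hB 5 w = 24 := by
  classical
  have hfib := G.fib u hu
  rw [← hr] at hfib
  set Fr := (F hB 4).filter (fun f => red f = red w) with hFr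
  have hw' := (mem_F hB 6 w).mp hw
  have hpm : ∀ f ∈ Fr, pairZ B w f = 2 ∨ pairZ B w f = -2 := by
    intro f hf
    rw [hFr, Finset.mem_filter, mem_F] at hf
    obtain ⟨a, b, ea, eb, n1, n2⟩ := halves hB hf.2.symm
    have ha : a ≠ 0 := by
      rintro rfl
      have : pairZ B w w = pairZ B f f := by rw [ea, eb]; simp [n_neg]
      omega
    have hb : b ≠ 0 := by
      rintro rfl
      have : pairZ B w w = pairZ B f f := by rw [ea, eb]; simp
      omega
    have h5 := ip_ge hB a ha
    have h6 := ip_ge hB b hb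
    have h7 := ip_even hB a
    have h8 := ip_even hB b
    omega
  have himg : (P hB 5 w).image (fun a => w - (2 : ℤ) • a) = Fr.filter (fun f => pairZ B w f = 2) := by
    ext f
    rw [Finset.mem_image, Finset.mem_filter, hFr, Finset.mem_filter, mem_F]
    constructor
    · rintro ⟨a, ha, rfl⟩
      have h1 := n_sub_two hB ha
      rw [mem_P] at ha
      refine ⟨⟨by omega, red_sub_two w a⟩, ?_⟩
      rw [ip_sub_right, ip_smul_right, ip_comm hB w a]; omega
    · rintro ⟨⟨h3, h4⟩, h2⟩
      obtain ⟨a, b, ea, eb, n1, n2⟩ := halves hB h4.symm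
      refine ⟨b, ?_, ?_⟩
      · rw [mem_P]
        have n3 : pairZ B b b = 4 := by omega
        have n5 : pairZ B a a = 6 := by omega
        refine ⟨n3, ?_⟩
        rw [ea, n_add hB] at hw'
        rw [ea, ip_add_right, ip_comm hB b a]; omega
      · rw [ea, eb, two_smul]; abel
  have hneg : (Fr.filter (fun f => pairZ B w f = 2)).card =
      (Fr.filter (fun f => ¬ pairZ B w f = 2)).card := by
    have hFn : ∀ f ∈ Fr, -f ∈ Fr := by
      intro f hf
      rw [hFr, Finset.mem_filter] at hf ⊢
      exact ⟨neg_mem_F hB 4 f hf.1, by rw [red_neg, hf.2]⟩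
    refine Finset.card_nbij' (fun a => -a) (fun a => -a) ?_ ?_ ?_ ?_
    · intro f hf
      have hf' := Finset.mem_filter.mp hf
      refine Finset.mem_coe.mpr (Finset.mem_filter.mpr ⟨hFn f hf'.1, ?_⟩)
      rw [ip_neg_right, hf'.2]; norm_num
    · intro f hf
      have hf' := Finset.mem_filter.mp hf
      refine Finset.mem_coe.mpr (Finset.mem_filter.mpr ⟨hFn f hf'.1, ?_⟩)
      have := hpm f hf'.1
      have := hf'.2
      rw [ip_neg_right]; omega
    · intro a _; simp
    · intro a _; simp
  have hsum := Finset.card_filter_add_card_filter_not (s := Fr) (fun f => pairZ B w f = 2)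
  have hc := Finset.card_image_of_injective (P hB 5 w) (sub_two_inj w)
  rw [himg] at hc
  rw [c, ← hc]
  omega

lemma c_eq_zero {k : ℤ} {w : LV} (h : ∀ a, pairZ B a a = 4 → pairZ B a w = k → False) :
    c hB k w = 0 := by
  rw [c, Finset.card_eq_zero, Finset.eq_empty_iff_forall_notMem]
  intro a ha
  rw [mem_P] at ha
  exact h a ha.1 ha.2

lemma c5_F5 (G : Good hB) {w : LV} (hw : w ∈ F hB 5) : c hB 5 w = 2 := by
  have hw' := (mem_F hB _ w).mp hw
  rcases G.cover w with h | ⟨u, hu, h⟩ | ⟨u, hu, h⟩ | ⟨u, hu, h⟩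
  · have := red_parity hB h
    rw [ip_zero_left] at this; omega
  · have := red_parity hB h
    rw [mem_F] at hu; omega
  · rw [mem_F] at hu
    refine count_two hB h ?_ (by omega) (by omega) (by omega) (by omega)
    rintro rfl; rw [ip_zero_left] at hu; omega
  · have := red_parity hB h
    rw [mem_F] at hu; omega

lemma c6_F7 (G : Good hB) {w : LV} (hw : w ∈ F hB 7) : c hB 6 w = 1 := by
  have hw' := (mem_F hB _ w).mp hw
  rcases G.cover w with h | ⟨u, hu, h⟩ | ⟨u, hu, h⟩ | ⟨u, hu, h⟩
  · have := red_parity hB h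
    rw [ip_zero_left] at this; omega
  · have := red_parity hB h
    rw [mem_F] at hu; omega
  · rw [mem_F] at hu
    exact count_one hB h (by omega) (by omega) (by omega) (by omega)
  · have := red_parity hB h
    rw [mem_F] at hu; omega

lemma c6_F6 {w u : LV} (hw : w ∈ F hB 6) (hu : u ∈ F hB 2) (h : red w = red u) :
    c hB 6 w = 2 := by
  rw [mem_F] at hw hu
  refine count_two hB h ?_ (by omega) (by omega) (by omega) (by omega)
  rintro rfl; rw [ip_zero_left] at hu; omega

lemma c6_F6' {w : LV} (hw : w ∈ F hB 6) (hn : ¬ ∃ u ∈ F hB 2, red w = red u) :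
    c hB 6 w = 0 := by
  rw [mem_F] at hw
  apply c_eq_zero
  intro a h1 h2
  apply hn
  refine ⟨w - (2 : ℤ) • a, ?_, (red_sub_two w a).symm⟩
  rw [mem_F, n_sub_two hB ((mem_P hB 6 w a).mpr ⟨h1, h2⟩)]; omega

lemma c5_F6' {w : LV} (hw : w ∈ F hB 6) (hn : ¬ ∃ u ∈ F hB 4, red w = red u) :
    c hB 5 w = 0 := by
  rw [mem_F] at hw
  apply c_eq_zero
  intro a h1 h2
  apply hn
  refine ⟨w - (2 : ℤ) • a, ?_, (red_sub_two w a).symm⟩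
  rw [mem_F, n_sub_two hB ((mem_P hB 5 w a).mpr ⟨h1, h2⟩)]; omega

lemma c7_F8 {w u : LV} (hw : w ∈ F hB 8) (hu : u ∈ F hB 2) (h : red w = red u) :
    c hB 7 w = 1 := by
  rw [mem_F] at hw hu
  exact count_one hB h (by omega) (by omega) (by omega) (by omega)

lemma c7_F8' {w : LV} (hw : w ∈ F hB 8) (hn : ¬ ∃ u ∈ F hB 2, red w = red u) :
    c hB 7 w = 0 := by
  rw [mem_F] at hw
  apply c_eq_zero
  intro a h1 h2
  apply hn
  refine ⟨w - (2 : ℤ) • a, ?_, (red_sub_two w a).symm⟩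
  rw [mem_F, n_sub_two hB ((mem_P hB 7 w a).mpr ⟨h1, h2⟩)]; omega

lemma F6_cases (G : Good hB) {w : LV} (hw : w ∈ F hB 6) :
    (∃ u ∈ F hB 2, red w = red u) ∨ (∃ u ∈ F hB 4, red w = red u) := by
  rw [mem_F] at hw
  rcases G.cover w with h | h | ⟨u, hu, h⟩ | h
  · rw [red_eq_iff] at h
    obtain ⟨a, rfl⟩ := h
    rw [zero_add, n_two] at hw
    have := ip_even hB a
    omega
  · exact Or.inl h
  · have := red_parity hB h
    rw [mem_F] at hu; omega
  · exact Or.inr h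

lemma F8_cases (G : Good hB) {w : LV} (hw : w ∈ F hB 8) :
    (∃ v ∈ F hB 2, w = (2 : ℤ) • v) ∨
    (∃ u ∈ F hB 2, red w = red u) ∨ (∃ u ∈ F hB 4, red w = red u) := by
  rw [mem_F] at hw
  rcases G.cover w with h | h | ⟨u, hu, h⟩ | h
  · rw [red_eq_iff] at h
    obtain ⟨a, rfl⟩ := h
    rw [zero_add, n_two] at hw
    exact Or.inl ⟨a, by rw [mem_F]; omega, by rw [zero_add]⟩
  · exact Or.inr (Or.inl h)
  · have := red_parity hB h
    rw [mem_F] at hu; omega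
  · exact Or.inr (Or.inr h)

end LeechAux

namespace LeechAux

variable {B : Matrix (Fin 24) (Fin 24) ℤ} {hB : IsLeech B}

lemma exists_frame (G : Good hB) :
    ∃ f : Fin 24 → LV, ∀ i j, pairZ B (f i) (f j) = if i = j then 8 else 0 := by
  classical
  have hpos : 0 < (F hB 4).card := by rw [G.c4]; norm_num
  obtain ⟨u, hu⟩ := Finset.card_pos.mp hpos
  have hfib := G.fib u hu
  set Fr := (F hB 4).filter (fun f => red f = red u) with hFr
  have h8 : ∀ v ∈ Fr, pairZ B v v = 8 := by
    intro v hv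
    rw [hFr, Finset.mem_filter, mem_F] at hv
    omega
  have hr : ∀ v ∈ Fr, red v = red u := fun v hv => (Finset.mem_filter.mp hv).2
  have hne : ∀ v ∈ Fr, v ≠ 0 := by
    rintro v hv rfl
    have := h8 _ hv
    rw [ip_zero_left] at this; omega
  have ho : ∀ x ∈ Fr.filter (fun v => 0 < toLex v), ∀ v ∈ Fr.filter (fun v => 0 < toLex v),
      x ≠ v → pairZ B x v = 0 := by
    intro x hx v hv hxv
    rw [Finset.mem_filter] at hx hv
    rcases short_eq4 hB ((hr x hx.1).trans (hr v hv.1).symm) (h8 x hx.1) (h8 v hv.1) with h | h | h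
    · exact absurd h hxv
    · exfalso
      have h3 := hx.2
      rw [h, toLex_neg, Left.neg_pos_iff] at h3
      exact lt_asymm h3 hv.2
    · exact h
  have h1 : (Fr.filter (fun v => 0 < toLex v)).card ≤ 24 :=
    orth_card _ (fun v hv => h8 v (Finset.mem_filter.mp hv).1) ho
  have hle : (Fr.filter (fun v => ¬ 0 < toLex v)).card ≤ (Fr.filter (fun v => 0 < toLex v)).card := by
    apply Finset.card_le_card_of_injOn (fun v => -v)
    · intro v hv
      have hv' := Finset.mem_filter.mp hv
      refine Finset.mem_coe.mpr (Finset.mem_filter.mpr ⟨?_, ?_⟩)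
      · have := Finset.mem_filter.mp hv'.1
        rw [hFr, Finset.mem_filter]
        exact ⟨neg_mem_F hB 4 v this.1, by rw [red_neg, this.2]⟩
      · rw [toLex_neg, Left.neg_pos_iff]
        refine lt_of_le_of_ne (not_lt.mp hv'.2) ?_
        intro h
        exact hne v hv'.1 (toLex.injective h)
    · intro a _ b _ h; exact neg_injective h
  have hsum := Finset.card_filter_add_card_filter_not (s := Fr) (fun v => 0 < toLex v)
  have h24 : (Fr.filter (fun v => 0 < toLex v)).card = 24 := by omega
  let e := Finset.equivFinOfCardEq h24
  refine ⟨fun i => (e.symm i : LV), ?_⟩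
  intro i j
  split_ifs with hij
  · subst hij
    exact h8 _ (Finset.mem_filter.mp (e.symm i).2).1
  · apply ho _ (e.symm i).2 _ (e.symm j).2
    intro h
    exact hij (e.symm.injective (Subtype.ext h))

lemma parseval {f : Fin 24 → LV}
    (hf : ∀ i j, pairZ B (f i) (f j) = if i = j then 8 else 0) (x y : LV) :
    ∑ i, pairZ B x (f i) * pairZ B (f i) y = 8 * pairZ B x y := by
  let M : Matrix (Fin 24) (Fin 24) ℤ := Matrix.of f
  have h1 : M * B * Mᵀ = (8 : ℤ) • (1 : Matrix (Fin 24) (Fin 24) ℤ) := by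
    ext i j
    have : (M * B * Mᵀ) i j = pairZ B (f i) (f j) := by
      rw [pairZ, Matrix.dotProduct_mulVec]
      rfl
    rw [this, hf]
    simp [Matrix.one_apply]
  let φ := Int.castRingHom ℚ
  have h2 : ((1/8 : ℚ) • ((M * B).map φ)) * (Mᵀ).map φ = 1 := by
    have := congrArg (fun N => N.map φ) h1
    rw [Matrix.map_mul] at this
    rw [Matrix.smul_mul, this]
    ext i j
    rw [Matrix.smul_apply, Matrix.map_apply, Matrix.smul_apply, Matrix.one_apply, Matrix.one_apply]
    by_cases hij : i = j <;> simp [hij, φ]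
  have h3 := mul_eq_one_comm.mp h2
  have h4 : Mᵀ * (M * B) = (8 : ℤ) • (1 : Matrix (Fin 24) (Fin 24) ℤ) := by
    rw [Matrix.mul_smul, ← Matrix.map_mul] at h3
    ext i j
    have h5 := congrFun (congrFun h3 i) j
    rw [Matrix.smul_apply, Matrix.map_apply, smul_eq_mul] at h5
    have h6 : ((((Mᵀ * (M * B)) i j : ℤ)) : ℚ) = 8 * ((1 : Matrix (Fin 24) (Fin 24) ℚ) i j) := by
      rw [← h5]; simp only [φ, Int.coe_castRingHom]; ring
    by_cases hij : i = j
    · subst hij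
      rw [Matrix.one_apply_eq] at h6
      simp only [Matrix.smul_apply, Matrix.one_apply_eq, smul_eq_mul]
      exact_mod_cast h6
    · rw [Matrix.one_apply_ne hij] at h6
      simp only [Matrix.smul_apply, Matrix.one_apply_ne hij, smul_eq_mul]
      exact_mod_cast h6
  have h5 : ∑ i, pairZ B x (f i) * pairZ B (f i) y = (Matrix.vecMul (Matrix.vecMul x B) Mᵀ) ⬝ᵥ
      ((M * B).mulVec y) := by
    apply Finset.sum_congr rfl
    intro i _
    congr 1
    · rw [pairZ, Matrix.dotProduct_mulVec]; rfl
    · rw [pairZ, ← Matrix.mulVec_mulVec]; rfl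
  rw [h5, ← Matrix.dotProduct_mulVec, Matrix.mulVec_mulVec, h4, Matrix.smul_mulVec,
    Matrix.one_mulVec, dotProduct_smul, smul_eq_mul, pairZ, Matrix.dotProduct_mulVec]

/-- The 2-design property. -/
lemma design (G : Good hB)
    (h2 : ∀ y ∈ F hB 2, ∑ x ∈ F hB 2, (pairZ B x y) ^ 2 = 131040) (z : LV) :
    ∑ x ∈ F hB 2, (pairZ B x z) ^ 2 = 32760 * pairZ B z z := by
  classical
  obtain ⟨f, hf⟩ := exists_frame G
  have par : ∀ x y, ∑ i, pairZ B x (f i) * pairZ B y (f i) = 8 * pairZ B x y := by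
    intro x y
    rw [← parseval hf]
    exact Finset.sum_congr rfl (fun i _ => by rw [ip_comm hB y])
  let M : Fin 24 → Fin 24 → ℤ := fun i j => ∑ x ∈ F hB 2, pairZ B x (f i) * pairZ B x (f j)
  have hsq : ∑ i, ∑ j, M i j ^ 2 = 64 * (196560 * 131040) := by
    have e1 : ∀ i j, M i j ^ 2 = ∑ x ∈ F hB 2, ∑ y ∈ F hB 2,
        (pairZ B x (f i) * pairZ B y (f i)) * (pairZ B x (f j) * pairZ B y (f j)) := by
      intro i j
      rw [pow_two, Finset.sum_mul_sum]
      refine Finset.sum_congr rfl (fun x _ => Finset.sum_congr rfl (fun y _ => by ring))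
    calc ∑ i, ∑ j, M i j ^ 2 = ∑ i, ∑ j, ∑ x ∈ F hB 2, ∑ y ∈ F hB 2,
        (pairZ B x (f i) * pairZ B y (f i)) * (pairZ B x (f j) * pairZ B y (f j)) := by
          simp only [e1]
      _ = ∑ x ∈ F hB 2, ∑ y ∈ F hB 2, ∑ i, ∑ j,
        (pairZ B x (f i) * pairZ B y (f i)) * (pairZ B x (f j) * pairZ B y (f j)) := by
          have s1 : ∀ i, ∑ j, ∑ x ∈ F hB 2, ∑ y ∈ F hB 2,
            (pairZ B x (f i) * pairZ B y (f i)) * (pairZ B x (f j) * pairZ B y (f j)) =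
            ∑ x ∈ F hB 2, ∑ y ∈ F hB 2, ∑ j,
            (pairZ B x (f i) * pairZ B y (f i)) * (pairZ B x (f j) * pairZ B y (f j)) := by
            intro i
            rw [Finset.sum_comm]
            exact Finset.sum_congr rfl (fun x _ => Finset.sum_comm)
          simp only [s1]
          rw [Finset.sum_comm]
          exact Finset.sum_congr rfl (fun x _ => Finset.sum_comm)
      _ = ∑ x ∈ F hB 2, ∑ y ∈ F hB 2, 64 * (pairZ B y x) ^ 2 := by
          refine Finset.sum_congr rfl (fun x _ => Finset.sum_congr rfl (fun y _ => ?_))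
          rw [← Finset.sum_mul_sum, par, ip_comm hB x y]; ring
      _ = ∑ x ∈ F hB 2, 64 * 131040 := by
          refine Finset.sum_congr rfl (fun x hx => ?_)
          rw [← Finset.mul_sum, h2 x hx]
      _ = _ := by rw [Finset.sum_const, G.c2]; norm_num
  have htr : ∑ i, M i i = 8 * (4 * 196560) := by
    calc ∑ i, M i i = ∑ x ∈ F hB 2, ∑ i, pairZ B x (f i) * pairZ B x (f i) := Finset.sum_comm
      _ = ∑ x ∈ F hB 2, 32 := by
          refine Finset.sum_congr rfl (fun x hx => ?_)
          rw [par, (mem_F hB 2 x).mp hx]; norm_num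
      _ = _ := by rw [Finset.sum_const, G.c2]; norm_num
  have hzero : ∑ i, ∑ j, (M i j - if i = j then 8 * 32760 else 0) ^ 2 = 0 := by
    have e1 : ∀ i j, (M i j - if i = j then 8 * 32760 else 0) ^ 2 =
        M i j ^ 2 + (if i = j then (8 * 32760) ^ 2 - 2 * (8 * 32760) * M i i else 0) := by
      intro i j
      split_ifs with h
      · subst h; ring
      · ring
    simp only [e1, Finset.sum_add_distrib]
    rw [hsq]
    simp only [Finset.sum_ite_eq, Finset.mem_univ, if_true]
    rw [Finset.sum_sub_distrib, ← Finset.mul_sum, htr]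
    simp
  have hM : ∀ i j, M i j = if i = j then 8 * 32760 else 0 := by
    intro i j
    have h3 := (Finset.sum_eq_zero_iff_of_nonneg
      (fun i _ => Finset.sum_nonneg (fun j _ => sq_nonneg _))).mp hzero i (Finset.mem_univ i)
    have h4 := (Finset.sum_eq_zero_iff_of_nonneg (fun j _ => sq_nonneg _)).mp h3 j
      (Finset.mem_univ j)
    have h5 := pow_eq_zero_iff (two_ne_zero) |>.mp h4
    linarith
  have hfin : 64 * ∑ x ∈ F hB 2, (pairZ B x z) ^ 2 = 64 * (32760 * pairZ B z z) := by
    calc 64 * ∑ x ∈ F hB 2, (pairZ B x z) ^ 2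
        = ∑ x ∈ F hB 2, (∑ i, pairZ B x (f i) * pairZ B z (f i)) *
            (∑ j, pairZ B x (f j) * pairZ B z (f j)) := by
          rw [Finset.mul_sum]
          refine Finset.sum_congr rfl (fun x _ => ?_)
          rw [par]; ring
      _ = ∑ x ∈ F hB 2, ∑ i, ∑ j, (pairZ B z (f i) * pairZ B z (f j)) *
            (pairZ B x (f i) * pairZ B x (f j)) := by
          refine Finset.sum_congr rfl (fun x _ => ?_)
          rw [Finset.sum_mul_sum]
          refine Finset.sum_congr rfl (fun i _ => Finset.sum_congr rfl (fun j _ => by ring))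
      _ = ∑ i, ∑ j, (pairZ B z (f i) * pairZ B z (f j)) * M i j := by
          rw [Finset.sum_comm]
          refine Finset.sum_congr rfl (fun i _ => ?_)
          rw [Finset.sum_comm]
          refine Finset.sum_congr rfl (fun j _ => ?_)
          rw [Finset.mul_sum]
      _ = ∑ i, (pairZ B z (f i) * pairZ B z (f i)) * (8 * 32760) := by
          simp only [hM, mul_ite, mul_zero, Finset.sum_ite_eq, Finset.mem_univ, if_true]
      _ = _ := by rw [← Finset.sum_mul, par]; ring
  linarith

lemma card_fib (m : ℤ) (w : LV) (h : ∀ a ∈ F hB 2, pairZ B a w ∈ Finset.Icc (-m) m) :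
    (F hB 2).card = ∑ k ∈ Finset.Icc (-m) m, c hB k w :=
  Finset.card_eq_sum_card_fiberwise h

lemma sq_fib (m : ℤ) (w : LV) (h : ∀ a ∈ F hB 2, pairZ B a w ∈ Finset.Icc (-m) m) :
    ∑ a ∈ F hB 2, (pairZ B a w) ^ 2 = ∑ k ∈ Finset.Icc (-m) m, k ^ 2 * (c hB k w : ℤ) := by
  rw [← Finset.sum_fiberwise_of_maps_to h]
  refine Finset.sum_congr rfl (fun k _ => ?_)
  have : ∀ a ∈ (F hB 2).filter (fun a => pairZ B a w = k), (pairZ B a w) ^ 2 = k ^ 2 := by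
    intro a ha; rw [(Finset.mem_filter.mp ha).2]
  rw [Finset.sum_congr rfl this, Finset.sum_const, nsmul_eq_mul, mul_comm]; rfl

lemma Icc4 : Finset.Icc (-4 : ℤ) 4 = {-4, -3, -2, -1, 0, 1, 2, 3, 4} := by decide
lemma Icc3 : Finset.Icc (-3 : ℤ) 3 = {-3, -2, -1, 0, 1, 2, 3} := by decide

lemma F2_range {w : LV} (hw : w ∈ F hB 2) : ∀ a ∈ F hB 2, pairZ B a w ∈ Finset.Icc (-4 : ℤ) 4 := by
  intro a ha
  rw [mem_F] at hw ha
  have h1 := ip_nonneg hB (a + w)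
  have h2 := ip_nonneg hB (a - w)
  rw [n_add hB] at h1
  rw [n_sub hB] at h2
  rw [Finset.mem_Icc]; omega

lemma F3_range {w : LV} (hw : w ∈ F hB 3) : ∀ a ∈ F hB 2, pairZ B a w ∈ Finset.Icc (-3 : ℤ) 3 := by
  intro a ha
  rw [mem_F] at hw ha
  have h1 := ip_ge hB (a + w) (by
    intro h
    rw [eq_neg_of_add_eq_zero_left h, n_neg] at ha; omega)
  have h2 := ip_ge hB (a - w) (by
    intro h
    rw [sub_eq_zero.mp h] at ha; omega)
  rw [n_add hB] at h1
  rw [n_sub hB] at h2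
  rw [Finset.mem_Icc]; omega

lemma c4_F2 {w : LV} (hw : w ∈ F hB 2) : c hB 4 w = 1 := by
  rw [c, Finset.card_eq_one]
  refine ⟨w, ?_⟩
  rw [mem_F] at hw
  ext x
  rw [mem_P, Finset.mem_singleton]
  constructor
  · rintro ⟨h1, h2⟩
    have : pairZ B (x - w) (x - w) = 0 := by rw [n_sub hB]; omega
    exact sub_eq_zero.mp (ip_self_eq_zero hB _ this)
  · rintro rfl; constructor <;> omega

lemma c3_F2 {w : LV} (hw : w ∈ F hB 2) : c hB 3 w = 0 := by
  apply c_eq_zero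
  intro a h1 h2
  rw [mem_F] at hw
  have := hB.2.2.2.2 (a - w)
  rw [n_sub hB] at this
  omega

lemma F2_sums {w : LV} (hw : w ∈ F hB 2) :
    (F hB 2).card = 2 + 2 * c hB 2 w + 2 * c hB 1 w + c hB 0 w ∧
    ∑ a ∈ F hB 2, (pairZ B a w) ^ 2 = 32 + 8 * (c hB 2 w : ℤ) + 2 * (c hB 1 w : ℤ) := by
  rw [sq_fib 4 w (F2_range hw), card_fib 4 w (F2_range hw), Icc4]
  simp [c_neg, c4_F2 hw, c3_F2 hw]
  constructor <;> ring

lemma F3_sums {w : LV} (hw : w ∈ F hB 3) :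
    (F hB 2).card = 2 * c hB 3 w + 2 * c hB 2 w + 2 * c hB 1 w + c hB 0 w ∧
    ∑ a ∈ F hB 2, (pairZ B a w) ^ 2 =
      18 * (c hB 3 w : ℤ) + 8 * (c hB 2 w : ℤ) + 2 * (c hB 1 w : ℤ) := by
  rw [sq_fib 3 w (F3_range hw), card_fib 3 w (F3_range hw), Icc3]
  simp [c_neg]
  constructor <;> ring

/-- The class is preserved along an orbit. -/
lemma class_orbit {O : Set LV} (hO : ∃ v, O = orbitOf B v) {k : ℤ} {w w' : LV} (hw : w ∈ O)
    (hw' : w' ∈ O) (h : ∃ u ∈ F hB k, red w = red u) : ∃ u ∈ F hB k, red w' = red u := by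
  obtain ⟨σ, hσ, rfl⟩ := orbit_trans hO hw hw'
  obtain ⟨u, hu, hr⟩ := h
  refine ⟨σ.mulVec u, ?_, red_act hr⟩
  rw [mem_F] at *
  rw [act_ip hσ, hu]

lemma orbit_not_B (G : Good hB) {O : Set LV} (hO : ∃ v, O = orbitOf B v) {T : Finset LV}
    (hT : (T : Set LV) = O) (hd : ¬ 8292375 ∣ T.card) {w : LV} (hw : w ∈ O) :
    ¬ ∃ u ∈ F hB 4, red w = red u := by
  classical
  intro hu
  apply hd
  have hmaps : ∀ v ∈ T, red v ∈ (F hB 4).image red := by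
    intro v hv
    have hv' : v ∈ O := by rw [← hT]; exact hv
    obtain ⟨u, hu, h⟩ := class_orbit hO hw hv' hu
    rw [h]; exact Finset.mem_image_of_mem _ hu
  have hle : ∀ u ∈ F hB 4, ∀ v ∈ F hB 4, (T.filter (fun x => red x = red u)).card ≤
      (T.filter (fun x => red x = red v)).card := by
    intro u hu v hv
    obtain ⟨σ, hσ, rfl⟩ := G.t4 u hu v hv
    apply Finset.card_le_card_of_injOn (fun a => σ.mulVec a)
    · intro a ha
      have ha' := Finset.mem_filter.mp ha
      refine Finset.mem_coe.mpr (Finset.mem_filter.mpr ⟨?_, red_act ha'.2⟩)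
      have h1 : a ∈ O := by rw [← hT]; exact ha'.1
      have h2 := orbit_closed hO h1 hσ
      rw [← hT] at h2; exact h2
    · exact (act_inj hσ).injOn
  obtain ⟨u, hu, -⟩ := hu
  rw [Finset.card_eq_sum_card_fiberwise hmaps]
  have hall : ∀ x ∈ (F hB 4).image red, (T.filter (fun y => red y = x)).card =
      (T.filter (fun y => red y = red u)).card := by
    intro x hx
    obtain ⟨v, hv, rfl⟩ := Finset.mem_image.mp hx
    exact le_antisymm (hle v hv u hu) (hle u hu v hv)
  rw [Finset.sum_congr rfl hall, Finset.sum_const, G.x4, smul_eq_mul]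
  exact Dvd.intro _ rfl

lemma card_pairs {x y : ℤ} {w : LV} (hw : pairZ B w w = 2 * x) :
    Nat.card {p : LV × LV // p.1 ∈ (F hB 2 : Set LV) ∧ p.2 ∈ (F hB y : Set LV) ∧ p.1 + p.2 = w} =
      c hB (x + 2 - y) w := by
  have e : {p : LV × LV // p.1 ∈ (F hB 2 : Set LV) ∧ p.2 ∈ (F hB y : Set LV) ∧ p.1 + p.2 = w} ≃
      {a : LV // a ∈ P hB (x + 2 - y) w} :=
    { toFun := fun p => ⟨p.1.1, by
        obtain ⟨⟨a, b⟩, h1, h2, h3⟩ := p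
        simp only [Finset.mem_coe, mem_F] at h1 h2 h3 ⊢
        rw [mem_P]
        refine ⟨by omega, ?_⟩
        rw [← h3, n_add hB] at hw
        rw [← h3, ip_add_right]; omega⟩
      invFun := fun a => ⟨(a.1, w - a.1), by
        obtain ⟨a, ha⟩ := a
        rw [mem_P] at ha
        simp only [Finset.mem_coe, mem_F]
        refine ⟨by omega, ?_, by abel⟩
        rw [n_sub hB, ip_comm hB w a]; omega⟩
      left_inv := by
        rintro ⟨⟨a, b⟩, h1, h2, h3⟩
        simp only at h3
        simp [← h3]
      right_inv := by
        rintro ⟨a, ha⟩; rfl }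
  rw [Nat.card_congr e, Nat.card_eq_fintype_card, Fintype.card_coe, c]

lemma c_const {T : Finset LV} (ht : ∀ u ∈ T, ∀ v ∈ T, ∃ σ ∈ ConwayGroup B, v = σ.mulVec u)
    (k : ℤ) {u v : LV} (hu : u ∈ T) (hv : v ∈ T) : c hB k v = c hB k u := by
  obtain ⟨σ, hσ, rfl⟩ := ht u hu v hv
  exact c_act hB k u hσ

end LeechAux

lemma LeechAux.arith_aux {c3 c2 c1 c0 d b f a : ℕ}
    (t3 : 196560 = 2 * c3 + 2 * c2 + 2 * c1 + c0)
    (r4 : 6075 * 65520 * d = 256 * 65520 * c1)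
    (r6 : b * 24 = 256 * 65520 * c1)
    (r7 : f * 1 = 256 * 65520 * c2)
    (r8 : a * 1 = 256 * 65520 * c3)
    (l6 : 518400 * 65520 ≤ b) (l7 : 2861568 * 65520 ≤ f) (n33 : c3 = 552)
    (des : 18 * (c3 : ℤ) + 8 * (c2 : ℤ) + 2 * (c1 : ℤ) = 32760 * (2 * 3)) :
    c2 = 11178 ∧ c1 = 48600 ∧ c0 = 75900 ∧ d = 2048 ∧ b = 518400 * 65520 ∧
      f = 2861568 * 65520 ∧ a = 141312 * 65520 := by
  subst n33
  have h1 : 48600 ≤ c1 := by clear t3 r4 r7 r8 l7 des; omega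
  have h2 : 11178 ≤ c2 := by clear t3 r4 r6 r8 l6 des h1; omega
  have h3 : c2 = 11178 := by clear t3 r4 r6 r7 r8 l6 l7; omega
  have h4 : c1 = 48600 := by clear t3 r4 r6 r7 r8 l6 l7; omega
  subst h3 h4
  clear des h1 h2 l6 l7
  refine ⟨rfl, rfl, ?_, ?_, ?_, ?_, ?_⟩
  · clear r4 r6 r7 r8; omega
  · clear t3 r6 r7 r8; omega
  · clear t3 r4 r7 r8; omega
  · clear t3 r4 r6 r8; omega
  · clear t3 r4 r6 r7; omega

set_option maxHeartbeats 4000000 in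
open scoped Classical in
/-- The decompositions of the Conway orbit products `O₂ ⊗ O₂` and `O₂ ⊗ O₃`: for every
`w ∈ Λ`, the number of ordered pairs `(a,b) ∈ O₂ × O₂` with `a + b = w` is as listed, and
likewise for `O₂ × O₃`. -/
theorem orbit_product_O2O2_and_O2O3
    (B : Matrix (Fin 24) (Fin 24) ℤ) (hB : IsLeech B)
    (O2 O3 O4 O5 O6a O6b O7 O8a O8c : Set LV)
    (h2 : OrbitData B O2 2 (3 * 65520)) (h3 : OrbitData B O3 3 (256 * 65520))
    (h4 : OrbitData B O4 4 (6075 * 65520)) (h5 : OrbitData B O5 5 (70656 * 65520))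
    (h6a : OrbitData B O6a 6 (518400 * 65520)) (h6b : OrbitData B O6b 6 (6900 * 65520))
    (h7 : OrbitData B O7 7 (2861568 * 65520)) (h8a : OrbitData B O8a 8 (3 * 65520))
    (h8c : OrbitData B O8c 8 (141312 * 65520))
    (h8adbl : O8a = {u : LV | ∃ v ∈ O2, u = (2 : ℤ) • v}) :
    (∀ w : LV,
      Nat.card {p : LV × LV // p.1 ∈ O2 ∧ p.2 ∈ O2 ∧ p.1 + p.2 = w} =
        if w = 0 then 196560 else if w ∈ O2 then 4600 else if w ∈ O3 then 552
        else if w ∈ O4 then 46 else if w ∈ O5 then 2 else if w ∈ O6b then 2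
        else if w ∈ O8a then 1 else 0) ∧
    (∀ w : LV,
      Nat.card {p : LV × LV // p.1 ∈ O2 ∧ p.2 ∈ O3 ∧ p.1 + p.2 = w} =
        if w ∈ O2 then 47104 else if w ∈ O3 then 11178 else if w ∈ O4 then 2048
        else if w ∈ O5 then 275 else if w ∈ O6a then 24 else if w ∈ O7 then 1
        else if w ∈ O8c then 1 else 0) := by
  obtain ⟨G, E2, E3, E4⟩ := LeechAux.good_of_orbits hB h2 h3 h4
  obtain ⟨T5, e5, k5, s5⟩ := LeechAux.orbit_finset hB h5
  obtain ⟨T6a, e6a, k6a, s6a⟩ := LeechAux.orbit_finset hB h6a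
  obtain ⟨T6b, e6b, k6b, s6b⟩ := LeechAux.orbit_finset hB h6b
  obtain ⟨T7, e7, k7, s7⟩ := LeechAux.orbit_finset hB h7
  obtain ⟨T8c, e8c, k8c, s8c⟩ := LeechAux.orbit_finset hB h8c
  push_cast at s5 s6a s6b s7 s8c
  obtain ⟨x2, hx2⟩ := Finset.card_pos.mp (show 0 < (LeechAux.F hB 2).card by rw [G.c2]; norm_num)
  obtain ⟨x3, hx3⟩ := Finset.card_pos.mp (show 0 < (LeechAux.F hB 3).card by rw [G.c3]; norm_num)
  obtain ⟨x4, hx4⟩ := Finset.card_pos.mp (show 0 < (LeechAux.F hB 4).card by rw [G.c4]; norm_num)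
  have sum2 : ∀ k, ∑ w ∈ LeechAux.F hB 2, LeechAux.c hB k w = 196560 * LeechAux.c hB k x2 := by
    intro k
    rw [Finset.sum_congr rfl (fun w hw => LeechAux.c_const G.t2 k hx2 hw), Finset.sum_const, G.c2,
      smul_eq_mul]
  have sum3 : ∀ k, ∑ w ∈ LeechAux.F hB 3, LeechAux.c hB k w =
      256 * 65520 * LeechAux.c hB k x3 := by
    intro k
    rw [Finset.sum_congr rfl (fun w hw => LeechAux.c_const G.t3 k hx3 hw), Finset.sum_const, G.c3,
      smul_eq_mul]
  have sum4 : ∀ k, ∑ w ∈ LeechAux.F hB 4, LeechAux.c hB k w =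
      6075 * 65520 * LeechAux.c hB k x4 := by
    intro k
    rw [Finset.sum_congr rfl (fun w hw => LeechAux.c_const G.t4 k hx4 hw), Finset.sum_const, G.c4,
      smul_eq_mul]
  -- sums over larger types
  have q4 := LeechAux.Q_eq hB 4 4 2 (by norm_num)
  have q5 := LeechAux.Q_eq hB 5 5 2 (by norm_num)
  have q6 := LeechAux.Q_eq hB 6 6 2 (by norm_num)
  have q3 := LeechAux.Q_eq hB 3 3 2 (by norm_num)
  have r4 := LeechAux.Q_eq hB 4 3 3 (by norm_num)
  have r5 := LeechAux.Q_eq hB 5 4 3 (by norm_num)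
  have r6 := LeechAux.Q_eq hB 6 5 3 (by norm_num)
  have r7 := LeechAux.Q_eq hB 7 6 3 (by norm_num)
  have r8 := LeechAux.Q_eq hB 8 7 3 (by norm_num)
  norm_num at q4 q5 q6 q3 r4 r5 r6 r7 r8
  simp only [LeechAux.c_neg] at q3 r4
  set A6 := (LeechAux.F hB 6).filter (fun w => ∃ u ∈ LeechAux.F hB 2, LeechAux.red w = LeechAux.red u)
    with hA6
  set B6 := (LeechAux.F hB 6).filter (fun w => ∃ u ∈ LeechAux.F hB 4, LeechAux.red w = LeechAux.red u)
    with hB6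
  set A8 := (LeechAux.F hB 8).filter (fun w => ∃ u ∈ LeechAux.F hB 2, LeechAux.red w = LeechAux.red u)
    with hA8
  have c66 : ∀ w ∈ LeechAux.F hB 6, LeechAux.c hB 6 w =
      if (∃ u ∈ LeechAux.F hB 2, LeechAux.red w = LeechAux.red u) then 2 else 0 := by
    intro w hw
    split_ifs with h
    · obtain ⟨u, hu, h⟩ := h; exact LeechAux.c6_F6 hw hu h
    · exact LeechAux.c6_F6' hw h
  have c65 : ∀ w ∈ LeechAux.F hB 6, LeechAux.c hB 5 w =
      if (∃ u ∈ LeechAux.F hB 4, LeechAux.red w = LeechAux.red u) then 24 else 0 := by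
    intro w hw
    split_ifs with h
    · obtain ⟨u, hu, h⟩ := h; exact LeechAux.c5_F6 G hw hu h
    · exact LeechAux.c5_F6' hw h
  have c87 : ∀ w ∈ LeechAux.F hB 8, LeechAux.c hB 7 w =
      if (∃ u ∈ LeechAux.F hB 2, LeechAux.red w = LeechAux.red u) then 1 else 0 := by
    intro w hw
    split_ifs with h
    · obtain ⟨u, hu, h⟩ := h; exact LeechAux.c7_F8 hw hu h
    · exact LeechAux.c7_F8' hw h
  rw [Finset.sum_congr rfl (fun w hw => LeechAux.c4_F4 G hw), Finset.sum_const, G.c4, sum2] at q4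
  rw [Finset.sum_congr rfl (fun w hw => LeechAux.c5_F5 G hw), Finset.sum_const, sum2] at q5
  rw [Finset.sum_congr rfl c66, ← Finset.sum_filter, ← hA6, Finset.sum_const, sum2] at q6
  rw [sum3, sum2] at q3
  rw [sum4, sum3] at r4
  rw [sum3] at r5
  rw [Finset.sum_congr rfl c65, ← Finset.sum_filter, ← hB6, Finset.sum_const, sum3] at r6
  rw [Finset.sum_congr rfl (fun w hw => LeechAux.c6_F7 G hw), Finset.sum_const, sum3] at r7
  rw [Finset.sum_congr rfl c87, ← Finset.sum_filter, ← hA8, Finset.sum_const, sum3] at r8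
  simp only [smul_eq_mul] at q4 q5 q6 q3 r4 r5 r6 r7 r8
  -- the orbit 6b
  have b6b : T6b ⊆ A6 := by
    intro w hw
    rw [hA6, Finset.mem_filter]
    refine ⟨s6b hw, ?_⟩
    rcases LeechAux.F6_cases G (s6b hw) with h | h
    · exact h
    · exact absurd h (LeechAux.orbit_not_B G h6b.1 e6b (by rw [k6b]; norm_num)
        (by rw [← e6b]; exact hw))
  have l6b := Finset.card_le_card b6b
  have l5 := Finset.card_le_card s5
  have l7 := Finset.card_le_card s7
  obtain ⟨t2, m2⟩ := LeechAux.F2_sums hx2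
  obtain ⟨t3, m3⟩ := LeechAux.F3_sums hx3
  rw [G.c2] at t2 t3
  rw [k6b] at l6b
  rw [k5] at l5
  rw [k7] at l7
  have n22 : LeechAux.c hB 2 x2 = 4600 := by omega
  have n21 : LeechAux.c hB 1 x2 = 47104 := by omega
  have n33 : LeechAux.c hB 3 x3 = 552 := by omega
  have cA6 : A6.card = 6900 * 65520 := by omega
  have cF5 : (LeechAux.F hB 5).card = 70656 * 65520 := by omega
  have EA6 : T6b = A6 := Finset.eq_of_subset_of_card_le b6b (by omega)
  have EF5 : T5 = LeechAux.F hB 5 := Finset.eq_of_subset_of_card_le s5 (by omega)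
  -- the orbit 6a
  have b6a : T6a ⊆ B6 := by
    intro w hw
    rw [hB6, Finset.mem_filter]
    refine ⟨s6a hw, ?_⟩
    rcases LeechAux.F6_cases G (s6a hw) with h | h
    · exfalso
      have : T6a ⊆ A6 := by
        intro v hv
        rw [hA6, Finset.mem_filter]
        exact ⟨s6a hv, LeechAux.class_orbit h6a.1 (by rw [← e6a]; exact hw)
          (by rw [← e6a]; exact hv) h⟩
      have := Finset.card_le_card this
      omega
    · exact h
  have l6a := Finset.card_le_card b6a
  rw [k6a] at l6a
  -- second moments
  have des := LeechAux.design G (by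
    intro y hy
    have h1 := (LeechAux.F2_sums hy).2
    rw [LeechAux.c_const G.t2 2 hx2 hy, LeechAux.c_const G.t2 1 hx2 hy, n22, n21] at h1
    rw [h1]; norm_num) x3
  rw [m3, (LeechAux.mem_F hB 3 x3).mp hx3] at des
  obtain ⟨n32, n31, n30, n43, cB6, cF7, cA8⟩ := LeechAux.arith_aux t3 r4 r6 r7 r8 l6a l7 n33 des
  have EB6 : T6a = B6 := Finset.eq_of_subset_of_card_le b6a (by rw [k6a, cB6])
  have EF7 : T7 = LeechAux.F hB 7 := Finset.eq_of_subset_of_card_le s7 (by rw [k7, cF7])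
  have b8c : T8c ⊆ A8 := by
    intro w hw
    rw [hA8, Finset.mem_filter]
    refine ⟨s8c hw, ?_⟩
    rcases LeechAux.F8_cases G (s8c hw) with h | h | h
    · exfalso
      have : T8c ⊆ (LeechAux.F hB 2).image (fun v => (2 : ℤ) • v) := by
        intro v hv
        obtain ⟨σ, hσ, rfl⟩ := LeechAux.orbit_trans h8c.1 (u := w) (v := v)
          (by rw [← e8c]; exact hw) (by rw [← e8c]; exact hv)
        obtain ⟨x, hx, rfl⟩ := h
        refine Finset.mem_image.mpr ⟨σ.mulVec x, ?_, ?_⟩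
        · rw [LeechAux.mem_F] at *
          rw [LeechAux.act_ip hσ, hx]
        · rw [Matrix.mulVec_smul]
      have h1 := Finset.card_le_card this
      have h2 := Finset.card_image_le (s := LeechAux.F hB 2) (f := fun v => (2 : ℤ) • v)
      rw [G.c2] at h2
      omega
    · exact h
    · exact absurd h (LeechAux.orbit_not_B G h8c.1 e8c (by rw [k8c]; norm_num)
        (by rw [← e8c]; exact hw))
  have EA8 : T8c = A8 := Finset.eq_of_subset_of_card_le b8c (by rw [k8c, cA8])
  have c54 : ∀ w ∈ LeechAux.F hB 5, LeechAux.c hB 4 w = 275 := by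
    have tr : ∀ u ∈ LeechAux.F hB 5, ∀ v ∈ LeechAux.F hB 5, ∃ σ ∈ ConwayGroup B,
        v = σ.mulVec u := by
      rw [← EF5]
      intro u hu v hv
      exact LeechAux.orbit_trans h5.1 (by rw [← e5]; exact hu) (by rw [← e5]; exact hv)
    intro w hw
    rw [Finset.sum_congr rfl (fun v hv => LeechAux.c_const tr 4 hw hv), Finset.sum_const, cF5,
      smul_eq_mul, n30] at r5
    omega
  -- membership
  have M2 : ∀ w, w ∈ O2 ↔ pairZ B w w = 4 := by
    intro w; rw [E2, Finset.mem_coe, LeechAux.mem_F]; norm_num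
  have M3 : ∀ w, w ∈ O3 ↔ pairZ B w w = 6 := by
    intro w; rw [E3, Finset.mem_coe, LeechAux.mem_F]; norm_num
  have M4 : ∀ w, w ∈ O4 ↔ pairZ B w w = 8 := by
    intro w; rw [E4, Finset.mem_coe, LeechAux.mem_F]; norm_num
  have M5 : ∀ w, w ∈ O5 ↔ pairZ B w w = 10 := by
    intro w; rw [← e5, EF5, Finset.mem_coe, LeechAux.mem_F]; norm_num
  have M7 : ∀ w, w ∈ O7 ↔ pairZ B w w = 14 := by
    intro w; rw [← e7, EF7, Finset.mem_coe, LeechAux.mem_F]; norm_num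
  have M6b : ∀ w, w ∈ O6b ↔ pairZ B w w = 12 ∧
      ∃ u ∈ LeechAux.F hB 2, LeechAux.red w = LeechAux.red u := by
    intro w; rw [← e6b, EA6, Finset.mem_coe, hA6, Finset.mem_filter, LeechAux.mem_F]; norm_num
  have M6a : ∀ w, w ∈ O6a ↔ pairZ B w w = 12 ∧
      ∃ u ∈ LeechAux.F hB 4, LeechAux.red w = LeechAux.red u := by
    intro w; rw [← e6a, EB6, Finset.mem_coe, hB6, Finset.mem_filter, LeechAux.mem_F]; norm_num
  have M8c : ∀ w, w ∈ O8c ↔ pairZ B w w = 16 ∧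
      ∃ u ∈ LeechAux.F hB 2, LeechAux.red w = LeechAux.red u := by
    intro w; rw [← e8c, EA8, Finset.mem_coe, hA8, Finset.mem_filter, LeechAux.mem_F]; norm_num
  have M8a : ∀ w, w ∈ O8a ↔ pairZ B w w = 16 ∧ ∃ v : LV, w = (2 : ℤ) • v := by
    intro w
    rw [h8adbl]
    constructor
    · rintro ⟨v, hv, rfl⟩
      rw [M2] at hv
      exact ⟨by rw [LeechAux.n_two, hv]; norm_num, v, rfl⟩
    · rintro ⟨h, v, rfl⟩
      rw [LeechAux.n_two] at h
      exact ⟨v, by rw [M2]; omega, rfl⟩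
  have FF : ∀ (w : LV) (k n : ℤ), n = 2 * k → pairZ B w w = n → w ∈ LeechAux.F hB k := by
    intro w k n hn h
    rw [LeechAux.mem_F, h, hn]
  constructor
  · intro w
    obtain ⟨x, hx⟩ : ∃ x, pairZ B w w = 2 * x := ⟨pairZ B w w / 2, by
      have := LeechAux.ip_even hB w; omega⟩
    have hcard := LeechAux.card_pairs (hB := hB) (y := 2) hx
    rw [← E2, add_sub_cancel_right] at hcard
    rw [hcard]
    have hw0 : w = 0 ↔ pairZ B w w = 0 :=
      ⟨fun h => by rw [h, LeechAux.ip_zero_left], LeechAux.ip_self_eq_zero hB w⟩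
    have hnn := LeechAux.ip_nonneg hB w
    have hn2 := hB.2.2.2.2 w
    simp only [hw0, M2, M3, M4, M5, M6b, M8a]
    rcases lt_or_ge 8 x with hbig | hsmall
    · rw [if_neg (by omega), if_neg (by omega), if_neg (by omega), if_neg (by omega),
        if_neg (by omega), if_neg (by omega), if_neg (by omega)]
      apply LeechAux.c_eq_zero
      intro a h1 h2
      have := LeechAux.n_sub_two hB ((LeechAux.mem_P hB x w a).mpr ⟨h1, h2⟩)
      have := LeechAux.ip_nonneg hB (w - (2 : ℤ) • a)
      omega
    · have hx0 : 0 ≤ x := by omega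
      interval_cases x
      · simp only [hx]
        norm_num
        rw [hw0.mpr hx, LeechAux.c, LeechAux.P, Finset.filter_true_of_mem, G.c2]
        intro a _; exact LeechAux.ip_zero_right a
      · exact absurd hx hn2
      · simp only [hx]
        norm_num
        rw [LeechAux.c_const G.t2 2 hx2 (FF w 2 _ rfl hx), n22]
      · simp only [hx]
        norm_num
        rw [LeechAux.c_const G.t3 3 hx3 (FF w 3 _ rfl hx), n33]
      · simp only [hx]
        norm_num
        exact LeechAux.c4_F4 G (FF w 4 _ rfl hx)
      · simp only [hx]
        norm_num
        exact LeechAux.c5_F5 G (FF w 5 _ rfl hx)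
      · rw [c66 w (FF w 6 _ rfl hx)]
        simp only [hx]
        norm_num
      · simp only [hx]
        norm_num
        apply LeechAux.c_eq_zero
        intro a h1 h2
        have h3 := LeechAux.n_sub_two hB ((LeechAux.mem_P hB 7 w a).mpr ⟨h1, h2⟩)
        have := hB.2.2.2.2 (w - (2 : ℤ) • a)
        omega
      · simp only [hx]
        norm_num
        have key : ∀ a, a ∈ LeechAux.P hB 8 w → w = (2 : ℤ) • a := by
          intro a ha
          have h3 := LeechAux.n_sub_two hB ha
          rw [hx] at h3
          exact sub_eq_zero.mp (LeechAux.ip_self_eq_zero hB _ (by rw [h3]; norm_num))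
        split_ifs with h
        · obtain ⟨v, hv⟩ := h
          rw [LeechAux.c, Finset.card_eq_one]
          refine ⟨v, ?_⟩
          have hv2 : w = (2 : ℤ) • v := by simpa using hv
          ext y
          rw [Finset.mem_singleton]
          constructor
          · intro hy
            have := key y hy
            rw [hv2] at this
            exact (smul_right_injective _ (by norm_num : (2 : ℤ) ≠ 0) this).symm
          · rintro rfl
            rw [LeechAux.mem_P]
            rw [hv2, LeechAux.n_two] at hx
            refine ⟨by omega, ?_⟩
            rw [hv2, LeechAux.ip_smul_right]; omega
        · apply LeechAux.c_eq_zero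
          intro a h1 h2
          apply h
          have := key a ((LeechAux.mem_P hB 8 w a).mpr ⟨h1, h2⟩)
          exact ⟨a, by simpa using this⟩
  · intro w
    obtain ⟨x, hx⟩ : ∃ x, pairZ B w w = 2 * x := ⟨pairZ B w w / 2, by
      have := LeechAux.ip_even hB w; omega⟩
    have hcard := LeechAux.card_pairs (hB := hB) (y := 3) hx
    rw [← E2, ← E3] at hcard
    rw [hcard]
    have hw0 : pairZ B w w = 0 → w = 0 := LeechAux.ip_self_eq_zero hB w
    have hnn := LeechAux.ip_nonneg hB w
    have hn2 := hB.2.2.2.2 w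
    simp only [M2, M3, M4, M5, M6a, M7, M8c]
    rcases lt_or_ge 8 x with hbig | hsmall
    · rw [if_neg (by omega), if_neg (by omega), if_neg (by omega), if_neg (by omega),
        if_neg (by omega), if_neg (by omega), if_neg (by omega)]
      apply LeechAux.c_eq_zero
      intro a h1 h2
      have h3 := LeechAux.n_sub_two hB ((LeechAux.mem_P hB (x + 2 - 3) w a).mpr ⟨h1, h2⟩)
      have h4 := LeechAux.ip_nonneg hB (w - (2 : ℤ) • a)
      have h5 := hB.2.2.2.2 (w - (2 : ℤ) • a)
      have h6 : x = 10 := by omega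
      have h7 := LeechAux.ip_self_eq_zero hB (w - (2 : ℤ) • a) (by omega)
      rw [sub_eq_zero.mp h7, LeechAux.n_two] at hx
      omega
    · have hx0 : 0 ≤ x := by omega
      interval_cases x
      · simp only [hx]
        norm_num
        rw [hw0 hx]
        apply LeechAux.c_eq_zero
        intro a h1 h2
        rw [LeechAux.ip_zero_right] at h2; omega
      · exact absurd hx hn2
      · simp only [hx]
        norm_num
        rw [LeechAux.c_const G.t2 1 hx2 (FF w 2 _ rfl hx), n21]
      · simp only [hx]
        norm_num
        rw [LeechAux.c_const G.t3 2 hx3 (FF w 3 _ rfl hx), n32]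
      · simp only [hx]
        norm_num
        rw [LeechAux.c_const G.t4 3 hx4 (FF w 4 _ rfl hx), n43]
      · simp only [hx]
        norm_num
        exact c54 w (FF w 5 _ rfl hx)
      · norm_num
        rw [c65 w (FF w 6 _ rfl hx)]
        simp only [hx]
        norm_num
      · simp only [hx]
        norm_num
        exact LeechAux.c6_F7 G (FF w 7 _ rfl hx)
      · norm_num
        rw [c87 w (FF w 8 _ rfl hx)]
        simp only [hx]
        norm_num

end
end
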